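/- arXiv:1901.09268 — 5 statements merged into one kernel-verified Lean document; each statement's English description precedes it below -/
import Mathlib

section
/- Let U ⊆ ℂ² be open, F : U → ℂ holomorphic with dF nonvanishing on U (i.e. (∂F/∂x, ∂F/∂y) ≠ (0,0) at every point of U), and let η = (η₁, η₂) be a holomorphic 1-form on U. Then the following are equivalent: (a) dF ∧ η ≡ 0 on U, i.e. (∂F/∂x)·η₂ − (∂F/∂y)·η₁ = 0 identically on U; (b) there exists a holomorphic function g : U → ℂ with η₁ = g·∂F/∂x and η₂ = g·∂F/∂y on U. In particular, for a holomorphic 1-form ω and holomorphic r : U → ℂ, dF ∧ (ω − dr) ≡ 0 holds if and only if there exists holomorphic g with ω = g·dF + dr. -/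
/-!
Pointwise, `dF ∧ η = 0` with `dF ≠ 0` forces `η` to be a multiple of `dF`, and the factor `g` is
`η₁ / ∂ₓF` or `η₂ / ∂ᵧF`, whichever denominator is nonzero; the two quotients agree where both make
sense. Hence `g` is locally a quotient of holomorphic functions, provided the partial derivatives
of `F` are themselves holomorphic.

This last fact (`differentiableOn_fderiv_apply`) is where complex analysis enters: the directional
derivative is given by the Cauchy formula
`∂ᵥf(p) = (2πi)⁻¹ ∮ t⁻² f(p + t v) dt` over a small circle, uniformly for `p` near a given point, and
one differentiates under the integral sign, the derivative of `f` being locally bounded by the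
Schwarz lemma. The statement about `ω - dr` is the first one applied to `η = ω - dr`.
-/

/-- ∂/∂x of a function on ℂ². -/
noncomputable def pdx (f : ℂ × ℂ → ℂ) (p : ℂ × ℂ) : ℂ := fderiv ℂ f p (1, 0)

/-- ∂/∂y of a function on ℂ². -/
noncomputable def pdy (f : ℂ × ℂ → ℂ) (p : ℂ × ℂ) : ℂ := fderiv ℂ f p (0, 1)

open Metric Filter Topology in
/-- A complex differentiable function has a locally bounded derivative: on a small ball `f` stays
within distance `1` of its central value, and the Schwarz lemma applies to smaller balls. -/
lemma exists_ball_norm_fderiv_le {U : Set (ℂ × ℂ)} (hU : IsOpen U) {f : ℂ × ℂ → ℂ}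
    (hf : DifferentiableOn ℂ f U) {p₀ : ℂ × ℂ} (hp₀ : p₀ ∈ U) :
    ∃ R > 0, ball p₀ (3 * R) ⊆ U ∧ ∃ C, ∀ q ∈ ball p₀ (3 * R), ‖fderiv ℂ f q‖ ≤ C := by
  have hc : ContinuousAt f p₀ := (hf.differentiableAt (hU.mem_nhds hp₀)).continuousAt
  have h1 : ∀ᶠ q in 𝓝 p₀, q ∈ U ∧ dist (f q) (f p₀) < 1 :=
    (hU.eventually_mem hp₀).and (hc.eventually (ball_mem_nhds _ one_pos))
  obtain ⟨ε, hε, hball⟩ := Metric.eventually_nhds_iff_ball.1 h1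
  have hsub : ∀ q ∈ ball p₀ (3 * (ε / 6)), ball q (ε / 2) ⊆ ball p₀ ε := fun q hq =>
    ball_subset_ball' (by rw [mem_ball] at hq; linarith)
  refine ⟨ε / 6, by positivity, fun q hq => (hball q ?_).1, 2 / (ε / 2), fun q hq => ?_⟩
  · exact hsub q hq (mem_ball_self (by positivity))
  · have hqq := (hball q (hsub q hq (mem_ball_self (by positivity)))).2
    refine Complex.norm_fderiv_le_div_of_mapsTo_ball (hf.mono fun z hz => ?_) (fun z hz => ?_)
      (by positivity)
    · exact (hball z (hsub q hq hz)).1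
    · have hz := (hball z (hsub q hq hz)).2
      rw [mem_closedBall]
      linarith [dist_triangle_right (f z) (f q) (f p₀)]

open Metric Filter Topology MeasureTheory in
/-- Directional derivatives of a holomorphic function of two variables are holomorphic. The
normalization `‖v‖ ≤ 1` only serves to keep the circle `p + t v`, `|t| = R`, inside a ball. -/
lemma differentiableOn_fderiv_apply {U : Set (ℂ × ℂ)} (hU : IsOpen U) {f : ℂ × ℂ → ℂ}
    (hf : DifferentiableOn ℂ f U) {v : ℂ × ℂ} (hv : ‖v‖ ≤ 1) :
    DifferentiableOn ℂ (fun p => fderiv ℂ f p v) U := by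
  intro p₀ hp₀
  refine DifferentiableAt.differentiableWithinAt ?_
  obtain ⟨R, hR, hRU, C, hC⟩ := exists_ball_norm_fderiv_le hU hf hp₀
  have hmem : ∀ p ∈ ball p₀ R, ∀ t : ℂ, ‖t‖ ≤ R → p + t • v ∈ ball p₀ (3 * R) := by
    intro p hp t ht
    have h2 : ‖t • v‖ ≤ R := by
      rw [norm_smul]
      nlinarith [norm_nonneg t, norm_nonneg v]
    rw [mem_ball, dist_eq_norm] at hp ⊢
    have h3 : p + t • v - p₀ = (p - p₀) + t • v := by abel
    rw [h3]
    linarith [norm_add_le (p - p₀) (t • v)]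
  have hdiff : ∀ p ∈ ball p₀ R, ∀ t : ℂ, ‖t‖ ≤ R → DifferentiableAt ℂ f (p + t • v) :=
    fun p hp t ht => hf.differentiableAt (hU.mem_nhds (hRU (hmem p hp t ht)))
  have hcirc : ∀ θ : ℝ, ‖circleMap 0 R θ‖ ≤ R := fun θ => by
    rw [norm_circleMap_zero, abs_of_pos hR]
  -- The Cauchy kernel `t⁻² dt`, pulled back to the angle.
  set K : ℝ → ℂ := fun θ => deriv (circleMap 0 R) θ * (1 / (circleMap 0 R θ - 0) ^ 2) with hK
  have hKc : Continuous K := by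
    have h0 : ∀ θ, (circleMap 0 R θ - 0) ^ 2 ≠ 0 := fun θ => by
      simpa using hR.ne'
    simp only [hK, deriv_circleMap]
    exact ((continuous_circleMap 0 R).mul continuous_const).mul
      (continuous_const.div (((continuous_circleMap 0 R).sub continuous_const).pow 2) h0)
  have hcauchy : ∀ p ∈ ball p₀ R,
      ∫ θ in (0 : ℝ)..2 * Real.pi, K θ * f (p + circleMap 0 R θ • v)
        = (2 * Real.pi * Complex.I) * fderiv ℂ f p v := by
    intro p hp
    have hline : ∀ t : ℂ, HasFDerivAt (fun t : ℂ => p + t • v)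
        ((ContinuousLinearMap.id ℂ ℂ).smulRight v) t := fun t =>
      ((hasFDerivAt_id t).smul_const v).const_add p
    have hd : DifferentiableOn ℂ (fun t : ℂ => f (p + t • v)) (closedBall 0 R) := by
      intro t ht
      have ht' : ‖t‖ ≤ R := by simpa using ht
      exact ((hdiff p hp t ht').comp t (hline t).differentiableAt).differentiableWithinAt
    have hder : deriv (fun t : ℂ => f (p + t • v)) 0 = fderiv ℂ f p v := by
      have h0 := hdiff p hp 0 (by simpa using hR.le)
      have h1 := (h0.hasFDerivAt.comp (0 : ℂ) (hline 0)).hasDerivAt.deriv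
      simpa [Function.comp_def] using h1
    have h := hd.deriv_eq_smul_circleIntegral hR
    rw [hder, smul_eq_mul] at h
    rw [← h, circleIntegral]
    simp only [hK, smul_eq_mul, mul_assoc]
  have hcont : ∀ p ∈ ball p₀ R, Continuous fun θ : ℝ => K θ * f (p + circleMap 0 R θ • v) := by
    intro p hp
    refine hKc.mul (continuous_iff_continuousAt.2 fun θ => ?_)
    have h1 : ContinuousAt (fun θ : ℝ => p + circleMap 0 R θ • v) θ :=
      (continuous_const.add ((continuous_circleMap 0 R).smul continuous_const)).continuousAt
    exact ContinuousAt.comp (g := f) (hdiff p hp _ (hcirc θ)).continuousAt h1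
  have hp₀' : p₀ ∈ ball p₀ R := mem_ball_self hR
  have hmain := intervalIntegral.hasFDerivAt_integral_of_dominated_of_fderiv_le (𝕜 := ℂ)
    (μ := volume) (a := 0) (b := 2 * Real.pi) (s := ball p₀ R) (x₀ := p₀)
    (F := fun p θ => K θ * f (p + circleMap 0 R θ • v))
    (F' := fun p θ => K θ • fderiv ℂ f (p + circleMap 0 R θ • v))
    (bound := fun θ => ‖K θ‖ * C) (ball_mem_nhds p₀ hR)
    (by filter_upwards [ball_mem_nhds p₀ hR] with p hp using (hcont p hp).aestronglyMeasurable)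
    ((hcont p₀ hp₀').intervalIntegrable _ _)
    (by
      -- `fderiv` is measurable for any function, so continuity of the derivative is not needed.
      have h1 : Measurable fun θ : ℝ => fderiv ℂ f (p₀ + circleMap 0 R θ • v) :=
        (measurable_fderiv ℂ f).comp
          (continuous_const.add ((continuous_circleMap 0 R).smul continuous_const)).measurable
      exact (hKc.measurable.smul h1).aestronglyMeasurable)
    (Eventually.of_forall fun θ _ p hp => by
      rw [norm_smul]
      exact mul_le_mul_of_nonneg_left (hC _ (hmem p hp _ (hcirc θ))) (norm_nonneg _))
    ((hKc.norm.mul continuous_const).intervalIntegrable _ _)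
    (Eventually.of_forall fun θ _ p hp => by
      have h1 := (hdiff p hp _ (hcirc θ)).hasFDerivAt
      have h2 : HasFDerivAt (fun p => f (p + circleMap 0 R θ • v))
          (fderiv ℂ f (p + circleMap 0 R θ • v)) p :=
        (hasFDerivAt_comp_add_right (f := f) (x := p) (circleMap 0 R θ • v)).2 h1
      exact h2.const_mul (K θ))
  have hpi := Complex.two_pi_I_ne_zero
  refine (hmain.differentiableAt.const_mul (2 * Real.pi * Complex.I)⁻¹).congr_of_eventuallyEq ?_
  filter_upwards [ball_mem_nhds p₀ hR] with p hp
  rw [hcauchy p hp, inv_mul_cancel_left₀ hpi]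

open Filter Topology in
/-- Division of a holomorphic pair `(η₁, η₂)` by a holomorphic pair `(a, b)` without common zeros,
possible as soon as the two pairs are pointwise proportional. -/
lemma exists_holomorphic_factor {U : Set (ℂ × ℂ)} (hU : IsOpen U) {a b η₁ η₂ : ℂ × ℂ → ℂ}
    (ha : DifferentiableOn ℂ a U) (hb : DifferentiableOn ℂ b U)
    (hη₁ : DifferentiableOn ℂ η₁ U) (hη₂ : DifferentiableOn ℂ η₂ U)
    (hab : ∀ p ∈ U, (a p, b p) ≠ (0, 0)) (h : ∀ p ∈ U, a p * η₂ p - b p * η₁ p = 0) :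
    ∃ g : ℂ × ℂ → ℂ, DifferentiableOn ℂ g U ∧
      ∀ p ∈ U, η₁ p = g p * a p ∧ η₂ p = g p * b p := by
  classical
  set g : ℂ × ℂ → ℂ := fun p => if a p ≠ 0 then η₁ p / a p else η₂ p / b p with hg
  have hgb : ∀ p ∈ U, b p ≠ 0 → g p = η₂ p / b p := by
    intro p hp hbp
    by_cases hap : a p = 0
    · simp [hg, hap]
    · simp only [hg, ne_eq, hap, not_false_eq_true, if_true]
      rw [div_eq_div_iff hap hbp]
      linear_combination -h p hp
  refine ⟨g, fun p hp => DifferentiableAt.differentiableWithinAt ?_, fun p hp => ?_⟩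
  · have hpU := hU.mem_nhds hp
    by_cases hap : a p = 0
    · have hbp : b p ≠ 0 := fun hbp => hab p hp (by rw [hap, hbp])
      have hb' := hb.differentiableAt hpU
      refine ((hη₂.differentiableAt hpU).mul (hb'.inv hbp)).congr_of_eventuallyEq ?_
      filter_upwards [hpU, hb'.continuousAt.eventually_ne hbp] with q hq hbq
      simp [hgb q hq hbq, div_eq_mul_inv]
    · have ha' := ha.differentiableAt hpU
      refine ((hη₁.differentiableAt hpU).mul (ha'.inv hap)).congr_of_eventuallyEq ?_
      filter_upwards [ha'.continuousAt.eventually_ne hap] with q haq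
      simp [hg, haq, div_eq_mul_inv]
  · have hw := h p hp
    by_cases hap : a p = 0
    · have hbp : b p ≠ 0 := fun hbp => hab p hp (by rw [hap, hbp])
      have h1 : η₁ p = 0 := by simpa [hap, hbp] using hw
      rw [hgb p hp hbp, hap, h1, div_mul_cancel₀ _ hbp]
      simp
    · have hgp : g p = η₁ p / a p := by simp [hg, hap]
      rw [hgp]
      refine ⟨(div_mul_cancel₀ _ hap).symm, ?_⟩
      field_simp
      linear_combination hw

/-- Lemma 1, (ii) ⟺ (iii): for F holomorphic with nonvanishing differential and a
holomorphic 1-form η = (η₁, η₂) on U, one has dF ∧ η ≡ 0 on U iff η = g·dF for some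
holomorphic g on U.  In particular, dF ∧ (ω − dr) ≡ 0 iff ω = g·dF + dr for some
holomorphic g. -/
theorem wedge_vanishes_iff_proportional
    (U : Set (ℂ × ℂ)) (hU : IsOpen U)
    (F : ℂ × ℂ → ℂ) (hF : DifferentiableOn ℂ F U)
    (hdF : ∀ p ∈ U, (pdx F p, pdy F p) ≠ (0, 0))
    (η₁ η₂ : ℂ × ℂ → ℂ)
    (hη₁ : DifferentiableOn ℂ η₁ U) (hη₂ : DifferentiableOn ℂ η₂ U) :
    ((∀ p ∈ U, pdx F p * η₂ p - pdy F p * η₁ p = 0) ↔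
      (∃ g : ℂ × ℂ → ℂ, DifferentiableOn ℂ g U ∧
        ∀ p ∈ U, η₁ p = g p * pdx F p ∧ η₂ p = g p * pdy F p)) ∧
    (∀ P Q r : ℂ × ℂ → ℂ, DifferentiableOn ℂ P U → DifferentiableOn ℂ Q U →
      DifferentiableOn ℂ r U →
      ((∀ p ∈ U, pdx F p * (Q p - pdy r p) - pdy F p * (P p - pdx r p) = 0) ↔
        (∃ g : ℂ × ℂ → ℂ, DifferentiableOn ℂ g U ∧
          ∀ p ∈ U, P p = g p * pdx F p + pdx r p ∧ Q p = g p * pdy F p + pdy r p))) := by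
  have hpdx : ∀ f : ℂ × ℂ → ℂ, DifferentiableOn ℂ f U → DifferentiableOn ℂ (pdx f) U :=
    fun f hf => differentiableOn_fderiv_apply hU hf (by simp [Prod.norm_def])
  have hpdy : ∀ f : ℂ × ℂ → ℂ, DifferentiableOn ℂ f U → DifferentiableOn ℂ (pdy f) U :=
    fun f hf => differentiableOn_fderiv_apply hU hf (by simp [Prod.norm_def])
  refine ⟨⟨exists_holomorphic_factor hU (hpdx F hF) (hpdy F hF) hη₁ hη₂ hdF, ?_⟩,
    fun P Q r hP hQ hr => ⟨fun h => ?_, ?_⟩⟩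
  · rintro ⟨g, -, hg⟩ p hp
    rw [(hg p hp).1, (hg p hp).2]
    ring
  · obtain ⟨g, hgd, hg⟩ := exists_holomorphic_factor hU (hpdx F hF) (hpdy F hF)
      (hP.sub (hpdx r hr)) (hQ.sub (hpdy r hr)) hdF h
    exact ⟨g, hgd, fun p hp =>
      ⟨sub_eq_iff_eq_add.1 (hg p hp).1, sub_eq_iff_eq_add.1 (hg p hp).2⟩⟩
  · rintro ⟨g, -, hg⟩ p hp
    rw [(hg p hp).1, (hg p hp).2]
    ring
end

section
/- Let U ⊆ ℂ² be open, F : U → ℂ holomorphic, ω = (P,Q) a holomorphic 1-form on U, and let (g_i, r_i), 1 ≤ i ≤ k, be a Françoise sequence of order k for dF + εω (with g₀ = 1). Define, for (x,y,ε) ∈ U × ℂ: G(x,y,ε) = Σ_{i=0}^{k} (−1)^i ε^i g_i(x,y), A = G·(∂F/∂x + εP), B = G·(∂F/∂y + εQ), C = Σ_{i=1}^{k} (−1)^{i+1} i ε^{i−1} r_i(x,y), and F_ε(x,y) = F(x,y) + Σ_{i=1}^{k} (−1)^{i+1} ε^i r_i(x,y). Then: C = ∂F_ε/∂ε identically on U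 × ℂ, and, regarding A − ∂F_ε/∂x and B − ∂F_ε/∂y as polynomials in ε with holomorphic coefficients on U, the coefficient of ε^n vanishes identically for every n ≤ k (indeed A − ∂F_ε/∂x = (−1)^k ε^{k+1} g_k P and B − ∂F_ε/∂y = (−1)^k ε^{k+1} g_k Q). -/
/-- G(x,y,ε) = Σ_{i=0}^{k} (−1)^i ε^i g_i(x,y). -/
noncomputable def Gser (k : ℕ) (g : ℕ → ℂ × ℂ → ℂ) (ε : ℂ) (q : ℂ × ℂ) : ℂ :=
  ∑ i ∈ Finset.range (k + 1), (-1 : ℂ) ^ i * ε ^ i * g i q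

/-- C(x,y,ε) = Σ_{i=1}^{k} (−1)^{i+1} i ε^{i−1} r_i(x,y). -/
noncomputable def Cser (k : ℕ) (r : ℕ → ℂ × ℂ → ℂ) (ε : ℂ) (q : ℂ × ℂ) : ℂ :=
  ∑ i ∈ Finset.Icc 1 k, (-1 : ℂ) ^ (i + 1) * (i : ℂ) * ε ^ (i - 1) * r i q

/-- F_ε(x,y) = F(x,y) + Σ_{i=1}^{k} (−1)^{i+1} ε^i r_i(x,y). -/
noncomputable def Feps (k : ℕ) (F : ℂ × ℂ → ℂ) (r : ℕ → ℂ × ℂ → ℂ) (ε : ℂ)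
    (q : ℂ × ℂ) : ℂ :=
  F q + ∑ i ∈ Finset.Icc 1 k, (-1 : ℂ) ^ (i + 1) * ε ^ i * r i q

/-- The telescoping identity, at a fixed point: `a i`, `D`, `w`, `s i` are the values of `g i`,
of a partial derivative of `F`, of the matching component of `ω`, and of the partial derivative
of `r i`. Raising `k` by one replaces the remainder `(-1)^k ε^(k+1) a_k w` by the next one. -/
lemma francoise_telescope (a s : ℕ → ℂ) (D w ε : ℂ) (h0 : a 0 = 1) (k : ℕ)
    (h : ∀ i, 1 ≤ i → i ≤ k → a (i - 1) * w = a i * D + s i) :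
    (∑ i ∈ Finset.range (k + 1), (-1 : ℂ) ^ i * ε ^ i * a i) * (D + ε * w)
      - (D + ∑ i ∈ Finset.Icc 1 k, (-1 : ℂ) ^ (i + 1) * ε ^ i * s i)
      = (-1 : ℂ) ^ k * ε ^ (k + 1) * a k * w := by
  induction k with
  | zero => simp [h0]
  | succ n ih =>
    have ih' := ih fun i h1 h2 => h i h1 (by omega)
    have hn := h (n + 1) (by omega) le_rfl
    rw [Nat.add_sub_cancel] at hn
    rw [Finset.sum_range_succ, Finset.sum_Icc_succ_top (by omega)]
    linear_combination ih' + (-1 : ℂ) ^ n * ε ^ (n + 1) * hn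

lemma fderiv_Feps (k : ℕ) (F : ℂ × ℂ → ℂ) (r : ℕ → ℂ × ℂ → ℂ) (ε : ℂ) (p v : ℂ × ℂ)
    (hF : DifferentiableAt ℂ F p)
    (hr : ∀ i, 1 ≤ i → i ≤ k → DifferentiableAt ℂ (r i) p) :
    fderiv ℂ (Feps k F r ε) p v
      = fderiv ℂ F p v
        + ∑ i ∈ Finset.Icc 1 k, (-1 : ℂ) ^ (i + 1) * ε ^ i * fderiv ℂ (r i) p v := by
  have h : HasFDerivAt (Feps k F r ε)
      (fderiv ℂ F p
        + ∑ i ∈ Finset.Icc 1 k, ((-1 : ℂ) ^ (i + 1) * ε ^ i) • fderiv ℂ (r i) p) p := by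
    refine hF.hasFDerivAt.add (HasFDerivAt.fun_sum fun i hi => ?_)
    rw [Finset.mem_Icc] at hi
    exact (hr i hi.1 hi.2).hasFDerivAt.const_mul _
  rw [h.fderiv]
  simp

/-- Key computation in the proof of Theorem 7(ii): for a Françoise sequence of order k,
setting G = Σ (−1)^i ε^i g_i, A = G·(∂F/∂x + εP), B = G·(∂F/∂y + εQ),
C = Σ (−1)^{i+1} i ε^{i−1} r_i and F_ε = F + Σ (−1)^{i+1} ε^i r_i, one has
C = ∂F_ε/∂ε, A − ∂F_ε/∂x = (−1)^k ε^{k+1} g_k P, B − ∂F_ε/∂y = (−1)^k ε^{k+1} g_k Q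
(in particular the coefficients of ε^n of A − ∂F_ε/∂x, B − ∂F_ε/∂y vanish for n ≤ k). -/
theorem francoise_gives_godbillon_vey_primitive
    (U : Set (ℂ × ℂ)) (hU : IsOpen U) (k : ℕ)
    (F P Q : ℂ × ℂ → ℂ) (g r : ℕ → ℂ × ℂ → ℂ)
    (hF : DifferentiableOn ℂ F U)
    (hP : DifferentiableOn ℂ P U) (hQ : DifferentiableOn ℂ Q U)
    (hg0 : ∀ p, g 0 p = 1)
    (hgd : ∀ i ≤ k, DifferentiableOn ℂ (g i) U)
    (hrd : ∀ i, 1 ≤ i → i ≤ k → DifferentiableOn ℂ (r i) U)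
    (hFr : ∀ i, 1 ≤ i → i ≤ k → ∀ p ∈ U,
      g (i - 1) p * P p = g i p * pdx F p + pdx (r i) p ∧
      g (i - 1) p * Q p = g i p * pdy F p + pdy (r i) p) :
    ∀ ε : ℂ, ∀ p ∈ U,
      HasDerivAt (fun e : ℂ => Feps k F r e p) (Cser k r ε p) ε ∧
      Gser k g ε p * (pdx F p + ε * P p) - pdx (Feps k F r ε) p
        = (-1 : ℂ) ^ k * ε ^ (k + 1) * g k p * P p ∧
      Gser k g ε p * (pdy F p + ε * Q p) - pdy (Feps k F r ε) p
        = (-1 : ℂ) ^ k * ε ^ (k + 1) * g k p * Q p := by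
  intro ε p hp
  have hFp : DifferentiableAt ℂ F p := hF.differentiableAt (hU.mem_nhds hp)
  have hrp : ∀ i, 1 ≤ i → i ≤ k → DifferentiableAt ℂ (r i) p := fun i h1 h2 =>
    (hrd i h1 h2).differentiableAt (hU.mem_nhds hp)
  refine ⟨?_, ?_, ?_⟩
  · unfold Feps Cser
    refine HasDerivAt.const_add _ (HasDerivAt.fun_sum fun i _ => ?_)
    refine (((hasDerivAt_pow i ε).const_mul ((-1 : ℂ) ^ (i + 1))).mul_const
      (r i p)).congr_deriv ?_
    ring
  · rw [pdx, pdx, fderiv_Feps k F r ε p _ hFp hrp]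
    exact francoise_telescope (fun i => g i p) (fun i => pdx (r i) p) (pdx F p) (P p) ε
      (hg0 p) k fun i h1 h2 => (hFr i h1 h2 p hp).1
  · rw [pdy, pdy, fderiv_Feps k F r ε p _ hFp hrp]
    exact francoise_telescope (fun i => g i p) (fun i => pdy (r i) p) (pdy F p) (Q p) ε
      (hg0 p) k fun i h1 h2 => (hFr i h1 h2 p hp).2
end

section
/- Let U ⊆ ℂ² be open, F : U → ℂ holomorphic, ω = (P,Q) a holomorphic 1-form on U, and let (g_i, r_i), 1 ≤ i ≤ k, be a Françoise sequence of order k for dF + εω (with g₀ = 1). Define on U × ℂ (coordinates x,y,ε): G = Σ_{i=0}^{k} (−1)^i ε^i g_i, A = G·(∂F/∂x + εP), B = G·(∂F/∂y + εQ), C = Σ_{i=1}^{k} (−1)^{i+1} i ε^{i−1} r_i, and let Ω be the 1-form (A, B, C). Then the integrability coefficient ⟨Ω ∧ dΩ⟩ := A·(∂C/∂y − ∂B/∂ε) + B·(∂A/∂ε − ∂C/∂x) + C·(∂B/∂x − ∂A/∂y), which is a polynomial in ε with holomorphic coefficients on U, has identically vanishing coefficient of ε^n for every n ≤ k − 1.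 -/
/-- The integrability coefficient ⟨Ω ∧ dΩ⟩ of the 1-form Ω = A dx + B dy + C dε on
ℂ² × ℂ (coordinates (x,y,ε)), namely
A·(∂C/∂y − ∂B/∂ε) + B·(∂A/∂ε − ∂C/∂x) + C·(∂B/∂x − ∂A/∂y). -/
noncomputable def intCoeff (A B C : ℂ × ℂ → ℂ → ℂ) (p : ℂ × ℂ) (ε : ℂ) : ℂ :=
  A p ε * (pdy (fun q => C q ε) p - deriv (fun e => B p e) ε) +
  B p ε * (deriv (fun e => A p e) ε - pdx (fun q => C q ε) p) +
  C p ε * (pdx (fun q => B q ε) p - pdy (fun q => A q ε) p)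

open Metric Set Filter Topology in
/-- Directional derivatives of a holomorphic function of two variables are holomorphic. -/
theorem differentiableAt_fderiv_apply {U : Set (ℂ × ℂ)} (hU : IsOpen U) {f : ℂ × ℂ → ℂ}
    (hf : DifferentiableOn ℂ f U) {p : ℂ × ℂ} (hp : p ∈ U) (v : ℂ × ℂ) :
    DifferentiableAt ℂ (fun q => fderiv ℂ f q v) p := by
  obtain ⟨δ, hδ, hball⟩ : ∃ δ > 0, ball p δ ⊆ U ∩ f ⁻¹' ball (f p) 1 := by
    apply Metric.mem_nhds_iff.1
    exact inter_mem (hU.mem_nhds hp)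
      ((hf.continuousOn.continuousAt (hU.mem_nhds hp)).preimage_mem_nhds
        (ball_mem_nhds _ one_pos))
  have hdiff : ∀ q ∈ ball p δ, DifferentiableAt ℂ f q := fun q hq =>
    hf.differentiableAt (hU.mem_nhds (hball hq).1)
  have hbound : ∀ q ∈ ball p (δ / 2), ‖fderiv ℂ f q‖ ≤ 2 / (δ / 2) := by
    intro q hq
    have hsub : ball q (δ / 2) ⊆ ball p δ := by
      apply ball_subset_ball'
      have := mem_ball.1 hq
      linarith
    have hq' : q ∈ ball p δ := hsub (mem_ball_self (by positivity))
    refine Complex.norm_fderiv_le_div_of_mapsTo_ball (R₁ := δ / 2)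
      (hf.mono fun x hx => (hball (hsub hx)).1) ?_ (by positivity)
    intro x hx
    have h1 : dist (f x) (f p) < 1 := (hball (hsub hx)).2
    have h2 : dist (f q) (f p) < 1 := (hball hq').2
    have h3 := dist_triangle_right (f x) (f q) (f p)
    exact mem_closedBall.2 (by linarith)
  -- The radius is chosen so that `q + z v` stays in `ball p (δ / 2)` for `q ∈ ball p (δ / 4)`,
  -- `‖z‖ ≤ R`.
  obtain ⟨R, hR, hRv⟩ : ∃ R > 0, R * ‖v‖ < δ / 4 := by
    refine ⟨δ / 4 / (‖v‖ + 1), by positivity, ?_⟩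
    rw [div_mul_eq_mul_div, div_lt_iff₀ (by positivity)]
    nlinarith [norm_nonneg v]
  have hmem : ∀ q ∈ ball p (δ / 4), ∀ z : ℂ, ‖z‖ ≤ R → q + z • v ∈ ball p (δ / 2) := by
    intro q hq z hz
    have h1 : ‖q - p‖ < δ / 4 := mem_ball_iff_norm.1 hq
    have h2 : ‖z • v‖ ≤ R * ‖v‖ := by
      rw [norm_smul]
      gcongr
    have h3 := norm_add_le (q - p) (z • v)
    rw [mem_ball_iff_norm, add_sub_right_comm]
    linarith
  have hsub : ball p (δ / 2) ⊆ ball p δ := ball_subset_ball (by linarith)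
  have hcauchy : ∀ q ∈ ball p (δ / 4),
      ∮ z in C(0, R), (1 / (z - 0) ^ 2) • f (q + z • v)
        = (2 * Real.pi * Complex.I) • fderiv ℂ f q v := by
    intro q hq
    have hd : ∀ z : ℂ, ‖z‖ ≤ R →
        HasDerivAt (fun z : ℂ => f (q + z • v)) (fderiv ℂ f (q + z • v) v) z := by
      intro z hz
      have hline : HasDerivAt (fun z : ℂ => q + z • v) v z := by
        simpa using ((hasDerivAt_id z).smul_const v).const_add q
      exact (hdiff _ (hsub (hmem q hq z hz))).hasFDerivAt.comp_hasDerivAt z hline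
    rw [DifferentiableOn.deriv_eq_smul_circleIntegral hR
      (f := fun z : ℂ => f (q + z • v)) (fun z hz =>
        (hd z (by simpa using hz)).differentiableAt.differentiableWithinAt)]
    rw [(hd 0 (by simpa using hR.le)).deriv]
    simp
  let c : ℝ → ℂ := fun t => deriv (circleMap 0 R) t * (1 / (circleMap 0 R t - 0) ^ 2)
  have hc : Continuous c := by
    have h0 : ∀ t, (circleMap 0 R t - 0) ^ 2 ≠ 0 := fun t => by
      simp [circleMap_eq_center_iff, hR.ne']
    simp only [c, deriv_circleMap]
    fun_prop (disch := exact h0 _)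
  have hnorm : ∀ t, ‖circleMap 0 R t‖ ≤ R := fun t => by simp [abs_of_pos hR]
  have hcont : ∀ q ∈ ball p (δ / 4),
      Continuous fun t : ℝ => c t • f (q + circleMap 0 R t • v) := by
    intro q hq
    refine hc.smul (continuous_iff_continuousAt.2 fun t => ?_)
    exact ContinuousAt.comp (f := fun t : ℝ => q + circleMap 0 R t • v)
      (hdiff _ (hsub (hmem q hq _ (hnorm t)))).continuousAt (by fun_prop)
  have key := intervalIntegral.hasFDerivAt_integral_of_dominated_of_fderiv_le
    (μ := MeasureTheory.volume) (a := 0) (b := 2 * Real.pi) (𝕜 := ℂ) (x₀ := p)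
    (F := fun q (t : ℝ) => c t • f (q + circleMap 0 R t • v))
    (F' := fun q (t : ℝ) => c t • fderiv ℂ f (q + circleMap 0 R t • v))
    (bound := fun t => ‖c t‖ * (2 / (δ / 2)))
    (s := ball p (δ / 4)) (ball_mem_nhds _ (by positivity))
    (by
      filter_upwards [ball_mem_nhds p (show 0 < δ / 4 by positivity)] with q hq
      exact (hcont q hq).aestronglyMeasurable)
    ((hcont p (mem_ball_self (by positivity))).intervalIntegrable _ _)
    (by
      have hm : Measurable fun t : ℝ => p + circleMap 0 R t • v :=
        Continuous.measurable (by fun_prop)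
      exact (hc.measurable.smul ((measurable_fderiv ℂ f).comp hm)).aestronglyMeasurable)
    (by
      refine Eventually.of_forall fun t _ q hq => ?_
      rw [norm_smul]
      gcongr
      exact hbound _ (hmem q hq _ (hnorm t)))
    (Continuous.intervalIntegrable (by fun_prop) _ _)
    (by
      refine Eventually.of_forall fun t _ q hq => ?_
      have h1 := (hdiff _ (hsub (hmem q hq _ (hnorm t)))).hasFDerivAt
      exact ((hasFDerivAt_comp_add_right (circleMap 0 R t • v)).2 h1).const_smul (c t))
  refine (key.differentiableAt.const_smul (2 * Real.pi * Complex.I)⁻¹).congr_of_eventuallyEq ?_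
  filter_upwards [ball_mem_nhds p (show 0 < δ / 4 by positivity)] with q hq
  have h := hcauchy q hq
  rw [circleIntegral] at h
  simp only [← smul_assoc] at h
  simp only [c, Pi.smul_apply]
  simp only [smul_eq_mul] at h ⊢
  rw [h, inv_mul_cancel_left₀ Complex.two_pi_I_ne_zero]

/-- Equality of mixed partials for a holomorphic function. -/
theorem pdx_pdy_comm {U : Set (ℂ × ℂ)} (hU : IsOpen U) {f : ℂ × ℂ → ℂ}
    (hf : DifferentiableOn ℂ f U) {p : ℂ × ℂ} (hp : p ∈ U) :
    pdx (pdy f) p = pdy (pdx f) p := by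
  have hx := differentiableAt_fderiv_apply hU hf hp (1, 0)
  have hy := differentiableAt_fderiv_apply hU hf hp (0, 1)
  have hfd : DifferentiableAt ℂ (fderiv ℂ f) p := by
    have heq : fderiv ℂ f = fun q =>
        fderiv ℂ f q (1, 0) • ContinuousLinearMap.fst ℂ ℂ ℂ +
          fderiv ℂ f q (0, 1) • ContinuousLinearMap.snd ℂ ℂ ℂ := by
      funext q
      ext <;> simp
    rw [heq]
    exact (hx.smul_const _).add (hy.smul_const _)
  have hsymm := second_derivative_symmetric_of_eventually
    (Filter.mem_of_superset (hU.mem_nhds hp) fun q hq =>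
      (hf.differentiableAt (hU.mem_nhds hq)).hasFDerivAt) hfd.hasFDerivAt (1, 0) (0, 1)
  have happ : ∀ v w, fderiv ℂ (fun q => fderiv ℂ f q v) p w = fderiv ℂ (fderiv ℂ f) p w v := by
    intro v w
    rw [fderiv_clm_apply hfd (differentiableAt_const v)]
    simp
  unfold pdx pdy
  rw [happ, happ, hsymm]

/-- One component of `G · (dF + εω) = dS + (-1)^k ε^{k+1} g_k ω` at a point: `γ`, `ρ` stand for the
values of `g_i` and of a partial derivative of `r_i`, `a` and `b` for the components of `dF`
and `ω`. -/
theorem telescope (k : ℕ) (γ ρ : ℕ → ℂ) (a b e : ℂ) (h0 : γ 0 = 1)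
    (h : ∀ i, 1 ≤ i → i ≤ k → γ (i - 1) * b = γ i * a + ρ i) :
    (∑ i ∈ Finset.range (k + 1), (-1 : ℂ) ^ i * e ^ i * γ i) * (a + e * b) =
      a + ∑ i ∈ Finset.Icc 1 k, (-1 : ℂ) ^ (i + 1) * e ^ i * ρ i
        + (-1) ^ k * e ^ (k + 1) * (γ k * b) := by
  induction k with
  | zero => simp [h0]
  | succ k ih =>
    rw [Finset.sum_range_succ, add_mul, ih fun i h1 h2 => h i h1 (by omega),
      Finset.sum_Icc_succ_top (by omega)]
    have hk : γ k * b = γ (k + 1) * a + ρ (k + 1) := h (k + 1) (by omega) le_rfl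
    rw [hk]
    ring

theorem deriv_telescoped (k : ℕ) (ρ : ℕ → ℂ) (a w e : ℂ) :
    deriv (fun e : ℂ => a + ∑ i ∈ Finset.Icc 1 k, (-1 : ℂ) ^ (i + 1) * e ^ i * ρ i
        + (-1) ^ k * e ^ (k + 1) * w) e =
      ∑ i ∈ Finset.Icc 1 k, (-1 : ℂ) ^ (i + 1) * (i : ℂ) * e ^ (i - 1) * ρ i
        + (-1) ^ k * ((k + 1 : ℂ) * e ^ k) * w := by
  have hs : HasDerivAt (fun e : ℂ => ∑ i ∈ Finset.Icc 1 k, (-1 : ℂ) ^ (i + 1) * e ^ i * ρ i)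
      (∑ i ∈ Finset.Icc 1 k, (-1 : ℂ) ^ (i + 1) * ((i : ℂ) * e ^ (i - 1)) * ρ i) e :=
    HasDerivAt.fun_sum fun i _ => ((hasDerivAt_pow i e).const_mul _).mul_const _
  have hw : HasDerivAt (fun e : ℂ => (-1) ^ k * e ^ (k + 1) * w)
      ((-1) ^ k * ((k + 1 : ℂ) * e ^ k) * w) e := by
    simpa using ((hasDerivAt_pow (k + 1) e).const_mul ((-1 : ℂ) ^ k)).mul_const w
  rw [((hs.const_add a).fun_add hw).deriv]
  simp only [mul_assoc]

theorem fderiv_linear_combination {U : Set (ℂ × ℂ)} (hU : IsOpen U) (s : Finset ℕ) (c : ℕ → ℂ)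
    {r : ℕ → ℂ × ℂ → ℂ} (hr : ∀ i ∈ s, DifferentiableOn ℂ (r i) U) {p : ℂ × ℂ} (hp : p ∈ U)
    (v : ℂ × ℂ) :
    fderiv ℂ (fun q => ∑ i ∈ s, c i * r i q) p v = ∑ i ∈ s, c i * fderiv ℂ (r i) p v := by
  have hd : ∀ i ∈ s, DifferentiableAt ℂ (r i) p := fun i hi =>
    (hr i hi).differentiableAt (hU.mem_nhds hp)
  rw [fderiv_fun_sum fun i hi => (hd i hi).const_mul (c i), sum_apply]
  refine Finset.sum_congr rfl fun i hi => ?_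
  rw [fderiv_const_mul (hd i hi)]
  simp

/-- If `(A, B) = dS + t • (u, v)` on `U`, then the exact part `dS` does not contribute to
`∂B/∂x - ∂A/∂y`. -/
theorem curl_eq {U : Set (ℂ × ℂ)} (hU : IsOpen U) {S A B u v : ℂ × ℂ → ℂ} (t : ℂ)
    (hS : DifferentiableOn ℂ S U) (hu : DifferentiableOn ℂ u U) (hv : DifferentiableOn ℂ v U)
    (hA : ∀ q ∈ U, A q = pdx S q + t * u q) (hB : ∀ q ∈ U, B q = pdy S q + t * v q)
    {p : ℂ × ℂ} (hp : p ∈ U) :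
    pdx B p - pdy A p = t * (pdx v p - pdy u p) := by
  have hU' := hU.mem_nhds hp
  have hSx : DifferentiableAt ℂ (pdx S) p := differentiableAt_fderiv_apply hU hS hp (1, 0)
  have hSy : DifferentiableAt ℂ (pdy S) p := differentiableAt_fderiv_apply hU hS hp (0, 1)
  have hu' := hu.differentiableAt hU'
  have hv' := hv.differentiableAt hU'
  have h1 : fderiv ℂ A p = fderiv ℂ (pdx S) p + t • fderiv ℂ u p := by
    rw [(Filter.eventuallyEq_of_mem hU' hA).fderiv_eq, fderiv_fun_add hSx (hu'.const_mul t),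
      fderiv_const_mul hu']
  have h2 : fderiv ℂ B p = fderiv ℂ (pdy S) p + t • fderiv ℂ v p := by
    rw [(Filter.eventuallyEq_of_mem hU' hB).fderiv_eq, fderiv_fun_add hSy (hv'.const_mul t),
      fderiv_const_mul hv']
  have hc : fderiv ℂ (pdy S) p (1, 0) = fderiv ℂ (pdx S) p (0, 1) := pdx_pdy_comm hU hS hp
  unfold pdx pdy at *
  rw [h1, h2]
  simp only [add_apply, smul_apply, smul_eq_mul, hc]
  ring

theorem iteratedDeriv_pow_mul_eq_zero {k n : ℕ} (hn : n < k) {h : ℂ → ℂ}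
    (hh : Differentiable ℂ h) : iteratedDeriv n (fun e => e ^ k * h e) 0 = 0 := by
  have han : AnalyticAt ℂ (fun e => e ^ k * h e) 0 :=
    Differentiable.analyticAt (by fun_prop) 0
  refine (natCast_le_analyticOrderAt_iff_iteratedDeriv_eq_zero han).1 ?_ n hn
  rw [natCast_le_analyticOrderAt han]
  exact ⟨h, hh.analyticAt 0, by simp⟩

/-- Theorem 7(ii): given a Françoise sequence (g_i, r_i) of order k for dF + εω, the
1-form Ω = (A, B, C) on U × ℂ built via G_i = (−1)^i g_i and R_i = (−1)^{i+1} i r_i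
satisfies the Godbillon-Vey integrability equation up to order k: the coefficient of
ε^n in ⟨Ω ∧ dΩ⟩ (a polynomial in ε with holomorphic coefficients) vanishes identically
on U for every n ≤ k − 1. -/
theorem francoise_solves_godbillon_vey
    (U : Set (ℂ × ℂ)) (hU : IsOpen U) (k : ℕ)
    (F P Q : ℂ × ℂ → ℂ) (g r : ℕ → ℂ × ℂ → ℂ)
    (hF : DifferentiableOn ℂ F U)
    (hP : DifferentiableOn ℂ P U) (hQ : DifferentiableOn ℂ Q U)
    (hg0 : ∀ p, g 0 p = 1)
    (hgd : ∀ i ≤ k, DifferentiableOn ℂ (g i) U)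
    (hrd : ∀ i, 1 ≤ i → i ≤ k → DifferentiableOn ℂ (r i) U)
    (hFr : ∀ i, 1 ≤ i → i ≤ k → ∀ p ∈ U,
      g (i - 1) p * P p = g i p * pdx F p + pdx (r i) p ∧
      g (i - 1) p * Q p = g i p * pdy F p + pdy (r i) p) :
    ∀ p ∈ U, ∀ n < k,
      iteratedDeriv n
        (fun ε : ℂ => intCoeff
          (fun q e => (∑ i ∈ Finset.range (k + 1), (-1 : ℂ) ^ i * e ^ i * g i q) *
            (pdx F q + e * P q))
          (fun q e => (∑ i ∈ Finset.range (k + 1), (-1 : ℂ) ^ i * e ^ i * g i q) *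
            (pdy F q + e * Q q))
          (fun q e => ∑ i ∈ Finset.Icc 1 k, (-1 : ℂ) ^ (i + 1) * (i : ℂ) * e ^ (i - 1) * r i q)
          p ε) 0 = 0 := by
  intro p hp n hn
  have hgk : DifferentiableOn ℂ (g k) U := hgd k le_rfl
  have hrd' : ∀ i ∈ Finset.Icc 1 k, DifferentiableOn ℂ (r i) U := fun i hi =>
    hrd i (Finset.mem_Icc.1 hi).1 (Finset.mem_Icc.1 hi).2
  have hA : ∀ q ∈ U, ∀ e : ℂ, (∑ i ∈ Finset.range (k + 1), (-1 : ℂ) ^ i * e ^ i * g i q) *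
      (pdx F q + e * P q) = pdx F q + ∑ i ∈ Finset.Icc 1 k, (-1 : ℂ) ^ (i + 1) * e ^ i * pdx (r i) q
        + (-1) ^ k * e ^ (k + 1) * (g k q * P q) := fun q hq e =>
    telescope k (fun i => g i q) (fun i => pdx (r i) q) _ _ e (hg0 q)
      fun i h1 h2 => (hFr i h1 h2 q hq).1
  have hB : ∀ q ∈ U, ∀ e : ℂ, (∑ i ∈ Finset.range (k + 1), (-1 : ℂ) ^ i * e ^ i * g i q) *
      (pdy F q + e * Q q) = pdy F q + ∑ i ∈ Finset.Icc 1 k, (-1 : ℂ) ^ (i + 1) * e ^ i * pdy (r i) q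
        + (-1) ^ k * e ^ (k + 1) * (g k q * Q q) := fun q hq e =>
    telescope k (fun i => g i q) (fun i => pdy (r i) q) _ _ e (hg0 q)
      fun i h1 h2 => (hFr i h1 h2 q hq).2
  have hS : ∀ e : ℂ, DifferentiableOn ℂ
      (fun q => ∑ i ∈ Finset.Icc 1 k, (-1 : ℂ) ^ (i + 1) * e ^ i * r i q) U := fun e =>
    DifferentiableOn.fun_sum fun i hi => (hrd' i hi).const_mul _
  have hdS : ∀ e : ℂ, ∀ q ∈ U, ∀ v : ℂ × ℂ,
      fderiv ℂ (fun q => F q + ∑ i ∈ Finset.Icc 1 k, (-1 : ℂ) ^ (i + 1) * e ^ i * r i q) q v =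
        fderiv ℂ F q v
          + ∑ i ∈ Finset.Icc 1 k, (-1 : ℂ) ^ (i + 1) * e ^ i * fderiv ℂ (r i) q v := by
    intro e q hq v
    rw [fderiv_fun_add (hF.differentiableAt (hU.mem_nhds hq))
      ((hS e).differentiableAt (hU.mem_nhds hq)), add_apply,
      fderiv_linear_combination hU _ _ hrd' hq]
  have hcurl := fun e : ℂ => curl_eq hU ((-1) ^ k * e ^ (k + 1)) (hF.add (hS e))
    (hgk.mul hP) (hgk.mul hQ)
    (A := fun q => (∑ i ∈ Finset.range (k + 1), (-1 : ℂ) ^ i * e ^ i * g i q) *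
      (pdx F q + e * P q))
    (B := fun q => (∑ i ∈ Finset.range (k + 1), (-1 : ℂ) ^ i * e ^ i * g i q) *
      (pdy F q + e * Q q))
    (fun q hq => (hA q hq e).trans (congrArg (· + _) (hdS e q hq (1, 0)).symm))
    (fun q hq => (hB q hq e).trans (congrArg (· + _) (hdS e q hq (0, 1)).symm)) hp
  have hCx : ∀ e : ℂ, pdx (fun q => ∑ i ∈ Finset.Icc 1 k,
      (-1 : ℂ) ^ (i + 1) * (i : ℂ) * e ^ (i - 1) * r i q) p = ∑ i ∈ Finset.Icc 1 k,
      (-1 : ℂ) ^ (i + 1) * (i : ℂ) * e ^ (i - 1) * pdx (r i) p := fun e =>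
    fderiv_linear_combination hU _ _ hrd' hp _
  have hCy : ∀ e : ℂ, pdy (fun q => ∑ i ∈ Finset.Icc 1 k,
      (-1 : ℂ) ^ (i + 1) * (i : ℂ) * e ^ (i - 1) * r i q) p = ∑ i ∈ Finset.Icc 1 k,
      (-1 : ℂ) ^ (i + 1) * (i : ℂ) * e ^ (i - 1) * pdy (r i) p := fun e =>
    fderiv_linear_combination hU _ _ hrd' hp _
  -- The cofactor of `ε ^ k` in `⟨Ω ∧ dΩ⟩`.
  let h : ℂ → ℂ := fun e =>
    (-1) ^ k * ((k + 1 : ℂ) *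
      (((∑ i ∈ Finset.range (k + 1), (-1 : ℂ) ^ i * e ^ i * g i p) * (pdy F p + e * Q p))
          * (g k p * P p)
        - ((∑ i ∈ Finset.range (k + 1), (-1 : ℂ) ^ i * e ^ i * g i p) * (pdx F p + e * P p))
          * (g k p * Q p))
      + (∑ i ∈ Finset.Icc 1 k, (-1 : ℂ) ^ (i + 1) * (i : ℂ) * e ^ (i - 1) * r i p)
        * (e * (pdx (g k * Q) p - pdy (g k * P) p)))
  have hh : Differentiable ℂ h := by
    unfold h
    fun_prop
  refine Eq.trans ?_ (iteratedDeriv_pow_mul_eq_zero hn hh)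
  congr 1
  funext e
  unfold intCoeff
  simp only [hcurl e, hCx e, hCy e]
  have hdA : deriv (fun e : ℂ => (∑ i ∈ Finset.range (k + 1), (-1 : ℂ) ^ i * e ^ i * g i p) *
      (pdx F p + e * P p)) e = _ := (congrArg (deriv · e) (funext (hA p hp))).trans
    (deriv_telescoped k (fun i => pdx (r i) p) (pdx F p) (g k p * P p) e)
  have hdB : deriv (fun e : ℂ => (∑ i ∈ Finset.range (k + 1), (-1 : ℂ) ^ i * e ^ i * g i p) *
      (pdy F p + e * Q p)) e = _ := (congrArg (deriv · e) (funext (hB p hp))).trans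
    (deriv_telescoped k (fun i => pdy (r i) p) (pdy F p) (g k p * Q p) e)
  rw [hdA, hdB]
  simp only [h]
  ring
end

section
/- Let U ⊆ ℂ² be open, F : U → ℂ holomorphic with (∂F/∂x, ∂F/∂y) ≠ (0,0) at every point of U, ω = (P,Q) a holomorphic 1-form on U, and k ≥ 1. Then the following are equivalent: (a) there exists a Françoise sequence (g_i, r_i), 1 ≤ i ≤ k, for dF + εω; (b) there exist holomorphic functions G₁,…,G_k, R₁,…,R_k on U such that, with G = 1 + Σ_{i=1}^{k} ε^i G_i, A = G·(∂F/∂x + εP), B = G·(∂F/∂y + εQ), C = Σ_{i=1}^{k} ε^{i−1} R_i, and Ω = (A,B,C), the integrability coefficient ⟨Ω ∧ dΩ⟩ has identically vanishing coefficient of ε^n for every n ≤ k − 1. -/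
namespace FGV
open Polynomial

/-! ### Polynomials in `ε` over a ring with two commuting derivations -/

section Algebra
variable {H : Type*} [CommRing H] [Algebra ℂ H]

/-- The extension of a derivation of `H` to `H[X]` acting on coefficients, so that `X` is a constant. -/
noncomputable def cd (d : Derivation ℂ H H) : Derivation ℂ H[X] H[X] :=
  PolynomialModule.equivPolynomialSelf.compDer d.mapCoeffs

lemma coeff_cd (d : Derivation ℂ H H) (p : H[X]) (n : ℕ) :
    (cd d p).coeff n = d (p.coeff n) := rfl

lemma cd_C (d : Derivation ℂ H H) (a : H) : cd d (C a) = C (d a) := by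
  ext n
  rw [coeff_cd, coeff_C, coeff_C]
  split_ifs <;> simp

lemma cd_X (d : Derivation ℂ H H) : cd d (X : H[X]) = 0 := by
  ext n
  rw [coeff_cd, coeff_X]
  split_ifs <;> simp

lemma cd_mul (d : Derivation ℂ H H) (p q : H[X]) :
    cd d (p * q) = p * cd d q + q * cd d p := by
  simp

lemma cd_X_pow (d : Derivation ℂ H H) (n : ℕ) : cd d (X ^ n : H[X]) = 0 := by
  simp [Derivation.leibniz_pow, cd_X]

lemma cd_derivative (d : Derivation ℂ H H) (p : H[X]) :
    cd d (derivative p) = derivative (cd d p) := by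
  ext n
  rw [coeff_cd, coeff_derivative, coeff_derivative, coeff_cd]
  have : d ((n : H) + 1) = 0 := by
    simp
  simp only [Derivation.leibniz, this, smul_eq_mul]
  ring

lemma eval_cd (d : Derivation ℂ H H) (p : H[X]) (c : ℂ) :
    d (p.eval (algebraMap ℂ H c)) = (cd d p).eval (algebraMap ℂ H c) := by
  induction p using Polynomial.induction_on' with
  | add p q hp hq => simp [hp, hq]
  | monomial n a =>
    rw [← C_mul_X_pow_eq_monomial, cd_mul, cd_C, cd_X_pow]
    simp [Derivation.leibniz_pow]
    ring

/-- The Jacobian bracket `{f, g}`, i.e. the coefficient of `df ∧ dg`. -/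
def jac {A : Type*} [CommRing A] [Algebra ℂ A] (d e : Derivation ℂ A A) (f g : A) : A :=
  d f * e g - e f * d g

/-- The integrability coefficient of the form `A dx + B dy + C dX`, with `d = ∂/∂x`, `e = ∂/∂y`. -/
noncomputable def wedge (d e : Derivation ℂ H H) (A B C : H[X]) : H[X] :=
  A * (cd e C - derivative B) + B * (derivative A - cd d C) + C * (cd d B - cd e A)

lemma wedge_scale (d e : Derivation ℂ H H) (u A B C : H[X]) :
    wedge d e (u * A) (u * B) (u * C) = u ^ 2 * wedge d e A B C := by
  simp only [wedge, cd_mul, derivative_mul]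
  ring

/-- Integrability coefficient of a perturbation of the closed form `DN`: an error `X^(m+1) (α, β)` in
the `dx`, `dy` components shows up at order `X^m`, through the derivative of `X^(m+1)`, and an
error `s` in the `dX` component contributes the bracket `{N, s}`. -/
lemma wedge_expand (d e : Derivation ℂ H H) (hde : ∀ f, d (e f) = e (d f)) (m : ℕ)
    (N α β s : H[X]) :
    ∃ T, wedge d e (cd d N + X ^ (m + 1) * α) (cd e N + X ^ (m + 1) * β) (s + derivative N) =
      jac (cd d) (cd e) N s - X ^ m * (((m : H[X]) + 1) * (cd d N * β - cd e N * α)) +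
        X ^ (m + 1) * T := by
  have hN : cd d (cd e N) = cd e (cd d N) := by
    ext n
    simp only [coeff_cd, hde]
  refine ⟨-cd d N * derivative β + cd e N * derivative α + α * cd e s - β * cd d s
    + X ^ (m + 1) * (β * derivative α - α * derivative β)
    + (s + derivative N) * (cd d β - cd e α), ?_⟩
  simp only [wedge, jac, cd_mul, map_add, cd_X_pow, derivative_mul, derivative_X_pow,
    cd_derivative, hN, Nat.add_sub_cancel, Nat.cast_add, Nat.cast_one, C_eq_natCast, C_1]
  ring

/-- If `{F, s} = 0`, then `s` extends to a polynomial `Φ` commuting with the deformation `N` of `F`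
up to order `L`, namely the Taylor expansion `Φ = Σ_{j ≤ L} h_j (N - F)^j / j!` where `h_0 = s` and
`h_(j+1) = dh_j / dF`. The division hypothesis `hdiv` expresses that `dF` has no zeros. -/
lemma exists_taylor (d e : Derivation ℂ H H) (hde : ∀ f, d (e f) = e (d f)) (F : H)
    (hdiv : ∀ a b, d F * b = e F * a → ∃ h, a = h * d F ∧ b = h * e F)
    (N : H[X]) (hN : N.coeff 0 = F) (L : ℕ) (s : H) (hs : jac d e F s = 0) :
    ∃ Φ : H[X], Φ.coeff 0 = s ∧ X ^ (L + 1) ∣ jac (cd d) (cd e) N Φ := by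
  have step : ∀ h : {h // jac d e F h = 0}, ∃ h' : {h // jac d e F h = 0},
      d h.1 = h'.1 * d F ∧ e h.1 = h'.1 * e F := by
    rintro ⟨h, hh⟩
    obtain ⟨h', h1, h2⟩ := hdiv (d h) (e h) (by rw [jac] at hh; linear_combination hh)
    refine ⟨⟨h', ?_⟩, h1, h2⟩
    have h3 := hde h
    rw [h1, h2] at h3
    simp only [Derivation.leibniz, smul_eq_mul, hde F] at h3
    rw [jac]
    linear_combination -h3
  -- `D` is differentiation with respect to `F` on the functions commuting with `F`
  choose D hD using step
  let h : ℕ → H := fun j => (D^[j] ⟨s, hs⟩).1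
  have hd (j) : d (h j) = h (j + 1) * d F := by
    simp only [h, Function.iterate_succ_apply']
    exact (hD _).1
  have he (j) : e (h j) = h (j + 1) * e F := by
    simp only [h, Function.iterate_succ_apply']
    exact (hD _).2
  let w : ℕ → H[X] := fun j => algebraMap ℂ H[X] ((j.factorial : ℂ)⁻¹)
  have hw (j) : w j = ((j : H[X]) + 1) * w (j + 1) := by
    have h1 : ((j : H[X]) + 1) = algebraMap ℂ H[X] ((j : ℂ) + 1) := by simp
    rw [h1, ← map_mul]
    simp only [w]
    congr 1
    have : (j : ℂ) + 1 ≠ 0 := Nat.cast_add_one_ne_zero j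
    rw [Nat.factorial_succ]
    push_cast
    field_simp
  have hwd (c : Derivation ℂ H H) (j) : cd c (w j) = 0 := (cd c).map_algebraMap _
  obtain ⟨n, hn⟩ : ∃ n, n = N - C F := ⟨_, rfl⟩
  have hNn : N = C F + n := by rw [hn]; ring
  have hXn : X ∣ n := by
    rw [X_dvd_iff, hn]; simp [hN]
  -- the bracket telescopes: only the contribution of the top Taylor term survives
  have key : jac (cd d) (cd e) N (∑ j ∈ Finset.range (L + 1), w j * (C (h j) * n ^ j)) =
      w L * (C (h (L + 1)) * n ^ L) * jac (cd d) (cd e) n (C F) := by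
    induction L with
    | zero =>
      simp only [jac, hNn, zero_add, Finset.range_one, Finset.sum_singleton, cd_mul, hwd, pow_zero,
        mul_one, map_add, cd_C, hd, he, C_mul]
      ring
    | succ L ih =>
      rw [Finset.sum_range_succ]
      have hadd (a b : H[X]) : jac (cd d) (cd e) N (a + b) =
          jac (cd d) (cd e) N a + jac (cd d) (cd e) N b := by
        simp only [jac, map_add]; ring
      rw [hadd, ih, hw L]
      simp only [jac, hNn, cd_mul, hwd, map_add, cd_C, hd, he, C_mul, Derivation.leibniz_pow,
        Nat.add_sub_cancel, smul_eq_mul, nsmul_eq_mul, Nat.cast_add, Nat.cast_one]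
      ring
  refine ⟨∑ j ∈ Finset.range (L + 1), w j * (C (h j) * n ^ j), ?_, ?_⟩
  rotate_left
  · rw [key, pow_succ]
    refine mul_dvd_mul ((pow_dvd_pow_of_dvd hXn L).mul_left _ |>.mul_left _) ?_
    obtain ⟨n', rfl⟩ := hXn
    exact ⟨jac (cd d) (cd e) n' (C F), by simp only [jac, cd_mul, cd_X]; ring⟩
  · rw [Finset.sum_range_succ']
    have h0 : n.coeff 0 = 0 := X_dvd_iff.1 hXn
    simp [coeff_zero_eq_eval_zero, eval_finsetSum] at h0 ⊢
    simp [h0, w, h]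

/-- If `{N, s}` vanishes to order `m`, its coefficient of order `m` is a bracket with `F`. -/
lemma exists_primitive (d e : Derivation ℂ H H) (hde : ∀ f, d (e f) = e (d f)) (F : H)
    (hdiv : ∀ a b, d F * b = e F * a → ∃ h, a = h * d F ∧ b = h * e F)
    (N : H[X]) (hN : N.coeff 0 = F) (m : ℕ) : ∀ s : H[X],
    (∀ j < m, (jac (cd d) (cd e) N s).coeff j = 0) →
    ∃ σ, jac d e F σ = (jac (cd d) (cd e) N s).coeff m := by
  have h0 (s : H[X]) : (jac (cd d) (cd e) N s).coeff 0 = jac d e F (s.coeff 0) := by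
    simp [jac, mul_coeff_zero, coeff_cd, hN]
  induction m with
  | zero => exact fun s _ => ⟨s.coeff 0, (h0 s).symm⟩
  | succ m ih =>
    intro s hs
    obtain ⟨Φ, hΦ, hdvd⟩ := exists_taylor d e hde F hdiv N hN (m + 1) (s.coeff 0)
      (by rw [← h0]; exact hs 0 m.succ_pos)
    obtain ⟨s', hs'⟩ : X ∣ s - Φ := by rw [X_dvd_iff]; simp [hΦ]
    have hj (j) (hjm : j ≤ m) : (jac (cd d) (cd e) N s').coeff j =
        (jac (cd d) (cd e) N s).coeff (j + 1) := by
      have h1 : jac (cd d) (cd e) N s = X * jac (cd d) (cd e) N s' + jac (cd d) (cd e) N Φ := by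
        have : s = X * s' + Φ := by rw [← hs']; ring
        rw [this]
        simp only [jac, map_add, cd_mul, cd_X]; ring
      rw [h1, coeff_add, coeff_X_mul, X_pow_dvd_iff.1 hdvd _ (by omega), add_zero]
    obtain ⟨σ, hσ⟩ := ih s' fun j hjm => by rw [hj j hjm.le]; exact hs _ (by omega)
    exact ⟨σ, by rw [hσ, hj m le_rfl]⟩

/-- `Σ_{i ≤ m} (-X)^i g_i`, the integrating factor attached to a Françoise sequence. -/
noncomputable def serM (g : ℕ → H) (m : ℕ) : H[X] :=
  ∑ i ∈ Finset.range (m + 1), X ^ i * C ((-1) ^ i * g i)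

/-- `F - Σ_{1 ≤ i ≤ m} (-X)^i r_i`, the approximate first integral attached to a Françoise sequence. -/
noncomputable def serN (F : H) (r : ℕ → H) (m : ℕ) : H[X] :=
  C F - ∑ i ∈ Finset.range m, X ^ (i + 1) * C ((-1) ^ (i + 1) * r (i + 1))

/-- Componentwise form of `M (dF + εω) = dN + (-1)^m ε^(m+1) g_m ω`. -/
lemma serM_mul (d : Derivation ℂ H H) (F P : H) (g r : ℕ → H) (m : ℕ) (hg : g 0 = 1)
    (h : ∀ i < m, g i * P = g (i + 1) * d F + d (r (i + 1))) :
    serM g m * (C (d F) + X * C P) =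
      cd d (serN F r m) + X ^ (m + 1) * C ((-1) ^ m * (g m * P)) := by
  induction m with
  | zero => simp [serM, serN, hg, cd_C]
  | succ m ih =>
    have hM : serM g (m + 1) = serM g m + X ^ (m + 1) * C ((-1) ^ (m + 1) * g (m + 1)) := by
      rw [serM, Finset.sum_range_succ]; rfl
    have hN : serN F r (m + 1) = serN F r m - X ^ (m + 1) * C ((-1) ^ (m + 1) * r (m + 1)) := by
      rw [serN, Finset.sum_range_succ, serN]; ring
    have hs : d ((-1) ^ (m + 1)) = 0 := by simp [Derivation.leibniz_pow]
    rw [hM, add_mul, ih fun i hi => h i (by omega), hN, h m (by omega)]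
    simp only [map_sub, cd_X_pow, cd_C, Derivation.leibniz, hs, smul_eq_mul, map_add,
      map_mul, map_zero]
    simp only [pow_succ, map_mul, map_neg, map_one]
    ring

/-- A Françoise sequence yields a form integrable up to order `k`. -/
lemma forward (d e : Derivation ℂ H H) (hde : ∀ f, d (e f) = e (d f)) (F P Q : H) (k : ℕ)
    (g r : ℕ → H) (hg : g 0 = 1)
    (hP : ∀ i < k, g i * P = g (i + 1) * d F + d (r (i + 1)))
    (hQ : ∀ i < k, g i * Q = g (i + 1) * e F + e (r (i + 1))) (n : ℕ) (hn : n < k) :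
    (wedge d e (serM g k * (C (d F) + X * C P)) (serM g k * (C (e F) + X * C Q))
      (derivative (serN F r k))).coeff n = 0 := by
  obtain ⟨T, hT⟩ := wedge_expand d e hde k (serN F r k) (C ((-1) ^ k * (g k * P)))
    (C ((-1) ^ k * (g k * Q))) 0
  rw [zero_add] at hT
  rw [serM_mul d F P g r k hg hP, serM_mul e F Q g r k hg hQ, hT]
  refine X_pow_dvd_iff.1 (?_ : X ^ k ∣ _) n hn
  refine dvd_add (dvd_sub ?_ (dvd_mul_right _ _)) (Dvd.dvd.mul_right (pow_dvd_pow _ k.le_succ) _)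
  simp [jac]

/-- A form integrable up to order `k` yields Françoise sequences of every order `m ≤ k`, constructed by
induction on `m`. -/
lemma backward (d e : Derivation ℂ H H) (hde : ∀ f, d (e f) = e (d f)) (F P Q : H)
    (hdiv : ∀ a b, d F * b = e F * a → ∃ h, a = h * d F ∧ b = h * e F) (k : ℕ)
    (G R : H[X]) (hG : G.coeff 0 = 1)
    (hw : ∀ n < k, (wedge d e (G * (C (d F) + X * C P)) (G * (C (e F) + X * C Q)) R).coeff n = 0)
    (m : ℕ) (hm : m ≤ k) :
    ∃ g r : ℕ → H, g 0 = 1 ∧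
      (∀ i < m, g i * P = g (i + 1) * d F + d (r (i + 1))) ∧
      (∀ i < m, g i * Q = g (i + 1) * e F + e (r (i + 1))) := by
  induction m with
  | zero => exact ⟨fun _ => 1, fun _ => 0, rfl, by simp, by simp⟩
  | succ m ih =>
    obtain ⟨g, r, hg, hgP, hgQ⟩ := ih (by omega)
    obtain ⟨z, hz⟩ : X ∣ 1 - G := by rw [X_dvd_iff]; simp [hG]
    -- `W` is the geometric series for `G⁻¹`, truncated
    obtain ⟨W, hW⟩ : ∃ W, G * W = 1 - X ^ (m + 2) * z ^ (m + 2) := by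
      refine ⟨∑ i ∈ Finset.range (m + 2), (1 - G) ^ i, ?_⟩
      have := mul_neg_geom_sum (1 - G) (m + 2)
      rw [← mul_pow, ← hz, ← this]; ring
    set M := serM g m with hMdef
    set N := serN F r m with hNdef
    have hP := serM_mul d F P g r m hg hgP
    have hQ := serM_mul e F Q g r m hg hgQ
    rw [← hMdef, ← hNdef] at hP hQ
    have hN0 : N.coeff 0 = F := by
      simp [hNdef, serN, mul_coeff_zero, finsetSum_coeff]
    have hsc := wedge_scale d e (M * W) (G * (C (d F) + X * C P)) (G * (C (e F) + X * C Q)) R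
    have hA : (M * W) * (G * (C (d F) + X * C P)) = cd d N + X ^ (m + 1) *
        (C ((-1) ^ m * (g m * P)) - X * (z ^ (m + 2) * (M * (C (d F) + X * C P)))) := by
      linear_combination hP + M * (C (d F) + X * C P) * hW
    have hB : (M * W) * (G * (C (e F) + X * C Q)) = cd e N + X ^ (m + 1) *
        (C ((-1) ^ m * (g m * Q)) - X * (z ^ (m + 2) * (M * (C (e F) + X * C Q)))) := by
      linear_combination hQ + M * (C (e F) + X * C Q) * hW
    have hC : M * W * R = (M * W * R - derivative N) + derivative N := by ring
    rw [hA, hB, hC] at hsc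
    obtain ⟨T, hT⟩ := wedge_expand d e hde m N
      (C ((-1) ^ m * (g m * P)) - X * (z ^ (m + 2) * (M * (C (d F) + X * C P))))
      (C ((-1) ^ m * (g m * Q)) - X * (z ^ (m + 2) * (M * (C (e F) + X * C Q))))
      (M * W * R - derivative N)
    rw [hsc] at hT
    have hdvd : X ^ (m + 1) ∣
        wedge d e (G * (C (d F) + X * C P)) (G * (C (e F) + X * C Q)) R :=
      X_pow_dvd_iff.2 fun n hn => hw n (by omega)
    obtain ⟨Z, hZ⟩ := hdvd
    rw [hZ] at hT
    generalize M * W * R - derivative N = s at hT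
    generalize z ^ (m + 2) * (M * (C (d F) + X * C P)) = α at hT
    generalize z ^ (m + 2) * (M * (C (e F) + X * C Q)) = β at hT
    obtain ⟨Y, hY⟩ : ∃ Y, jac (cd d) (cd e) N s = X ^ m * (((m : H[X]) + 1) *
        (cd d N * (C ((-1) ^ m * (g m * Q)) - X * β) -
          cd e N * (C ((-1) ^ m * (g m * P)) - X * α))) + X ^ (m + 1) * Y :=
      ⟨(M * W) ^ 2 * Z - T, by linear_combination -hT⟩
    obtain ⟨σ, hσ⟩ := exists_primitive d e hde F hdiv N hN0 m s fun j hj => by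
      refine X_pow_dvd_iff.1 (?_ : X ^ m ∣ _) j hj
      rw [hY, pow_succ, mul_assoc]
      exact dvd_add (dvd_mul_right _ _) (dvd_mul_right _ _)
    have hcoef : (jac (cd d) (cd e) N s).coeff m =
        ((m : H) + 1) * ((-1) ^ m * (g m * (d F * Q - e F * P))) := by
      have : jac (cd d) (cd e) N s = X ^ m * (((m : H[X]) + 1) *
        (cd d N * (C ((-1) ^ m * (g m * Q)) - X * β) -
          cd e N * (C ((-1) ^ m * (g m * P)) - X * α)) + X * Y) := by rw [hY]; ring
      rw [this, coeff_X_pow_mul', if_pos le_rfl, Nat.sub_self]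
      simp only [coeff_add, coeff_sub, mul_coeff_zero, coeff_cd, coeff_C_zero, coeff_X_zero, hN0,
        coeff_natCast_ite, if_true, coeff_one_zero]
      ring
    rw [hcoef] at hσ
    -- `r_{m+1} = (-1)^m σ / (m+1)`
    let c : ℂ := (-1) ^ m * ((m : ℂ) + 1)⁻¹
    have hc : algebraMap ℂ H c * (((m : H) + 1) * (-1) ^ m) = 1 := by
      have h1 : ((m : H) + 1) * (-1) ^ m = algebraMap ℂ H (((m : ℂ) + 1) * (-1) ^ m) := by simp
      have h2 : (m : ℂ) + 1 ≠ 0 := Nat.cast_add_one_ne_zero m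
      rw [h1, ← map_mul, ← map_one (algebraMap ℂ H)]
      congr 1
      simp only [c]
      field_simp
      rw [← pow_mul, mul_comm, pow_mul]; simp
    have hjc : jac d e F (algebraMap ℂ H c * σ) = g m * (d F * Q - e F * P) := by
      have : jac d e F (algebraMap ℂ H c * σ) = algebraMap ℂ H c * jac d e F σ := by
        simp only [jac, Derivation.leibniz, smul_eq_mul, Derivation.map_algebraMap]; ring
      rw [this, hσ]
      linear_combination (g m * (d F * Q - e F * P)) * hc
    generalize algebraMap ℂ H c * σ = ρ at hjc
    obtain ⟨γ, h1, h2⟩ := hdiv (g m * P - d ρ) (g m * Q - e ρ) (by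
      rw [jac] at hjc; linear_combination -hjc)
    refine ⟨Function.update g (m + 1) γ, Function.update r (m + 1) ρ, ?_, ?_, ?_⟩
    · rw [Function.update_of_ne (by omega), hg]
    · intro i hi
      rw [Function.update_of_ne (by omega)]
      rcases Nat.lt_succ_iff_lt_or_eq.1 hi with hi | rfl
      · rw [Function.update_of_ne (by omega), Function.update_of_ne (by omega), hgP i hi]
      · rw [Function.update_self, Function.update_self]; linear_combination h1
    · intro i hi
      rw [Function.update_of_ne (by omega)]
      rcases Nat.lt_succ_iff_lt_or_eq.1 hi with hi | rfl
      · rw [Function.update_of_ne (by omega), Function.update_of_ne (by omega), hgQ i hi]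
      · rw [Function.update_self, Function.update_self]; linear_combination h2

end Algebra

/-! ### Partial derivatives of holomorphic functions of two variables -/

section Analysis
open Metric MeasureTheory

/-- Directional derivatives of a holomorphic function are holomorphic. On a small ball the derivative
along `v` is a Cauchy integral over circles in the complex lines of direction `v`; this integral is
differentiated under the integral sign, the derivative of `f` being bounded by the Schwarz lemma.
The normalization `‖v‖ ≤ 1` keeps the circles inside the ball. -/
lemma differentiableOn_fderiv_apply {U : Set (ℂ × ℂ)} (hU : IsOpen U) {f : ℂ × ℂ → ℂ}
    (hf : DifferentiableOn ℂ f U) (v : ℂ × ℂ) (hv : ‖v‖ ≤ 1) :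
    DifferentiableOn ℂ (fun p => fderiv ℂ f p v) U := by
  intro p₀ hp₀
  refine DifferentiableAt.differentiableWithinAt ?_
  have hfU (q) (hq : q ∈ U) : DifferentiableAt ℂ f q := hf.differentiableAt (hU.mem_nhds hq)
  obtain ⟨ρ, hρ, hρU, hρf⟩ : ∃ ρ : ℝ, 0 < ρ ∧ ball p₀ (4 * ρ) ⊆ U ∧
      ∀ q ∈ ball p₀ (4 * ρ), dist (f q) (f p₀) ≤ 1 := by
    have h1 : {q | q ∈ U ∧ dist (f q) (f p₀) ≤ 1} ∈ nhds p₀ := by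
      refine Filter.inter_mem (hU.mem_nhds hp₀) ?_
      exact (hfU p₀ hp₀).continuousAt (closedBall_mem_nhds _ one_pos)
    obtain ⟨δ, hδ, h⟩ := Metric.mem_nhds_iff.1 h1
    refine ⟨δ / 4, by positivity, ?_, ?_⟩ <;> rw [mul_div_cancel₀ δ four_ne_zero]
    · exact fun q hq => (h hq).1
    · exact fun q hq => (h hq).2
  have hmem (p) (hp : p ∈ ball p₀ ρ) (z : ℂ) (hz : ‖z‖ ≤ ρ) : p + z • v ∈ ball p₀ (2 * ρ) := by
    rw [mem_ball, dist_eq_norm] at hp ⊢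
    have h1 : ‖z • v‖ ≤ ρ := by
      rw [norm_smul]
      nlinarith [norm_nonneg z, norm_nonneg v]
    calc ‖p + z • v - p₀‖ = ‖(p - p₀) + z • v‖ := by congr 1; abel
      _ ≤ ‖p - p₀‖ + ‖z • v‖ := norm_add_le _ _
      _ < 2 * ρ := by linarith
  have h24 : ball p₀ (2 * ρ) ⊆ ball p₀ (4 * ρ) := ball_subset_ball (by linarith)
  have hbd (q) (hq : q ∈ ball p₀ (2 * ρ)) : ‖fderiv ℂ f q‖ ≤ 2 / ρ := by
    have hsub : ball q ρ ⊆ ball p₀ (4 * ρ) := ball_subset_ball' (by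
      rw [mem_ball] at hq; linarith)
    refine Complex.norm_fderiv_le_div_of_mapsTo_ball (hf.mono (hsub.trans hρU)) ?_ hρ
    intro x hx
    rw [mem_closedBall]
    have := dist_triangle_right (f x) (f q) (f p₀)
    linarith [hρf x (hsub hx), hρf q (h24 hq)]
  have hcm (θ : ℝ) : ‖circleMap 0 ρ θ‖ ≤ ρ := by
    rw [norm_circleMap_zero, abs_of_pos hρ]
  have hcm0 (θ : ℝ) : circleMap 0 ρ θ ≠ 0 := by
    rw [← norm_ne_zero_iff, norm_circleMap_zero]; positivity
  -- the Cauchy kernel for the first derivative, on the circle of radius `ρ`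
  let κ : ℝ → ℂ := fun θ => deriv (circleMap 0 ρ) θ * (1 / (circleMap 0 ρ θ) ^ 2)
  have hκc : Continuous κ := by
    simp only [κ, deriv_circleMap]
    refine Continuous.mul (by fun_prop) ?_
    exact continuous_const.div (by fun_prop) fun θ => pow_ne_zero 2 (hcm0 θ)
  have hκn (θ) : ‖κ θ‖ ≤ ρ⁻¹ := by
    simp only [κ, deriv_circleMap, norm_mul, norm_div, norm_pow, norm_circleMap_zero,
      abs_of_pos hρ, Complex.norm_I, norm_one]
    apply le_of_eq
    field_simp
  have hcont (p) (hp : p ∈ ball p₀ ρ) :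
      Continuous fun θ : ℝ => κ θ • f (p + circleMap 0 ρ θ • v) := by
    refine hκc.smul (hf.continuousOn.comp_continuous (by fun_prop) fun θ => ?_)
    exact hρU (h24 (hmem p hp _ (hcm θ)))
  have hderivInt : HasFDerivAt (fun p => ∫ θ in (0 : ℝ)..2 * Real.pi, κ θ • f (p + circleMap 0 ρ θ • v))
      (∫ θ in (0 : ℝ)..2 * Real.pi, κ θ • fderiv ℂ f (p₀ + circleMap 0 ρ θ • v)) p₀ := by
    refine intervalIntegral.hasFDerivAt_integral_of_dominated_of_fderiv_le (𝕜 := ℂ)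
      (F := fun p θ => κ θ • f (p + circleMap 0 ρ θ • v))
      (F' := fun p θ => κ θ • fderiv ℂ f (p + circleMap 0 ρ θ • v))
      (bound := fun _ => ρ⁻¹ * (2 / ρ)) (ball_mem_nhds p₀ hρ) ?_ ?_ ?_ ?_ ?_ ?_
    · filter_upwards [ball_mem_nhds p₀ hρ] with p hp
      exact (hcont p hp).aestronglyMeasurable
    · exact (hcont p₀ (mem_ball_self hρ)).intervalIntegrable _ _
    · refine (hκc.measurable.smul ((measurable_fderiv ℂ f).comp ?_)).aestronglyMeasurable
      exact Continuous.measurable (by fun_prop)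
    · refine Filter.Eventually.of_forall fun θ _ p hp => ?_
      rw [norm_smul]
      exact mul_le_mul (hκn θ) (hbd _ (hmem p hp _ (hcm θ))) (norm_nonneg _) (by positivity)
    · exact intervalIntegrable_const
    · refine Filter.Eventually.of_forall fun θ _ p hp => ?_
      have h1 := (hfU _ (hρU (h24 (hmem p hp _ (hcm θ))))).hasFDerivAt
      exact ((hasFDerivAt_comp_add_right _).2 h1).const_smul (κ θ)
  have hcauchy : ∀ p ∈ ball p₀ ρ, fderiv ℂ f p v = (2 * Real.pi * Complex.I)⁻¹ •
      ∫ θ in (0 : ℝ)..2 * Real.pi, κ θ • f (p + circleMap 0 ρ θ • v) := by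
    intro p hp
    have hd (z : ℂ) (hz : ‖z‖ ≤ ρ) :
        HasDerivAt (fun z : ℂ => f (p + z • v)) (fderiv ℂ f (p + z • v) v) z := by
      have h1 := (hfU _ (hρU (h24 (hmem p hp z hz)))).hasFDerivAt
      have h2 : HasDerivAt (fun z : ℂ => p + z • v) v z := by
        simpa using ((hasDerivAt_id z).smul_const v).const_add p
      exact h1.comp_hasDerivAt z h2
    have h3 := DifferentiableOn.deriv_eq_smul_circleIntegral (c := 0) hρ
      (f := fun z : ℂ => f (p + z • v)) fun z hz =>
        (hd z (by simpa using hz)).differentiableAt.differentiableWithinAt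
    rw [(hd 0 (by simpa using hρ.le)).deriv, zero_smul, add_zero, circleIntegral] at h3
    rw [eq_inv_smul_iff₀ Complex.two_pi_I_ne_zero, ← h3]
    simp only [κ, sub_zero, smul_eq_mul, mul_assoc]
  refine (hderivInt.differentiableAt.const_smul ((2 * Real.pi * Complex.I)⁻¹)).congr_of_eventuallyEq ?_
  filter_upwards [ball_mem_nhds p₀ hρ] with p hp using hcauchy p hp

lemma fderiv_comm {U : Set (ℂ × ℂ)} (hU : IsOpen U) {f : ℂ × ℂ → ℂ}
    (hf : DifferentiableOn ℂ f U) {p : ℂ × ℂ} (hp : p ∈ U) :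
    fderiv ℂ (fun q => fderiv ℂ f q (0, 1)) p (1, 0) =
      fderiv ℂ (fun q => fderiv ℂ f q (1, 0)) p (0, 1) := by
  have h1 := (differentiableOn_fderiv_apply hU hf (1, 0) (by simp)).differentiableAt
    (hU.mem_nhds hp)
  have h2 := (differentiableOn_fderiv_apply hU hf (0, 1) (by simp)).differentiableAt
    (hU.mem_nhds hp)
  have hdec : fderiv ℂ f = fun q => (fderiv ℂ f q (1, 0)) • ContinuousLinearMap.fst ℂ ℂ ℂ +
      (fderiv ℂ f q (0, 1)) • ContinuousLinearMap.snd ℂ ℂ ℂ := by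
    funext q
    ext <;> simp
  have h3 : DifferentiableAt ℂ (fderiv ℂ f) p := by
    rw [hdec]
    exact (h1.smul_const _).add (h2.smul_const _)
  have hs := second_derivative_symmetric_of_eventually
    (Filter.eventually_of_mem (hU.mem_nhds hp) fun q hq =>
      (hf.differentiableAt (hU.mem_nhds hq)).hasFDerivAt) h3.hasFDerivAt (1, 0) (0, 1)
  have hap (v w : ℂ × ℂ) : fderiv ℂ (fun q => fderiv ℂ f q v) p w =
      fderiv ℂ (fderiv ℂ f) p w v := by
    have := (h3.hasFDerivAt.clm_apply (hasFDerivAt_const v p)).fderiv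
    rw [this]; simp
  rw [hap, hap, hs]

end Analysis

/-! ### The ring of holomorphic functions on an open set -/

section Holomorphic

/-- Extension by zero of a function on `U`. -/
noncomputable def extZ {U : Set (ℂ × ℂ)} (f : U → ℂ) : ℂ × ℂ → ℂ :=
  Function.extend Subtype.val f 0

lemma extZ_apply {U : Set (ℂ × ℂ)} (f : U → ℂ) (p : U) : extZ f p = f p :=
  Subtype.val_injective.extend_apply f 0 p

lemma extZ_eqOn {U : Set (ℂ × ℂ)} {f : U → ℂ} {g : ℂ × ℂ → ℂ} (h : ∀ p : U, f p = g p) :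
    Set.EqOn (extZ f) g U := fun p hp => by
  rw [← h ⟨p, hp⟩]; exact extZ_apply f ⟨p, hp⟩

/-- The algebra of holomorphic functions on `U`, as functions on the subtype, so that equality means
equality on `U`. -/
def Hol (U : Set (ℂ × ℂ)) : Subalgebra ℂ (U → ℂ) where
  carrier := {f | DifferentiableOn ℂ (extZ f) U}
  mul_mem' {f g} hf hg := (DifferentiableOn.mul hf hg).congr
    (extZ_eqOn fun p => by simp [extZ_apply])
  add_mem' {f g} hf hg := (DifferentiableOn.add hf hg).congr
    (extZ_eqOn fun p => by simp [extZ_apply])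
  algebraMap_mem' c := (differentiableOn_const c).congr (extZ_eqOn fun p => by simp)

variable {U : Set (ℂ × ℂ)}

lemma fderiv_extZ (hU : IsOpen U) {f : U → ℂ} {g : ℂ × ℂ → ℂ} (h : ∀ p : U, f p = g p) (p : U) :
    fderiv ℂ (extZ f) p = fderiv ℂ g p :=
  ((extZ_eqOn h).eventuallyEq_of_mem (hU.mem_nhds p.2)).fderiv_eq

lemma Hol.differentiableAt (hU : IsOpen U) (f : Hol U) (p : U) :
    DifferentiableAt ℂ (extZ f.1) p :=
  DifferentiableOn.differentiableAt f.2 (hU.mem_nhds p.2)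

/-- The derivative in the direction `v` as a derivation of `Hol U`. -/
noncomputable def pd (hU : IsOpen U) (v : ℂ × ℂ) (hv : ‖v‖ ≤ 1) :
    Derivation ℂ (Hol U) (Hol U) :=
  Derivation.mk'
    { toFun := fun f => ⟨fun p => fderiv ℂ (extZ f.1) p v,
        (differentiableOn_fderiv_apply hU f.2 v hv).congr (extZ_eqOn fun _ => rfl)⟩
      map_add' := fun f g => by
        refine Subtype.ext (funext fun p => ?_)
        change fderiv ℂ (extZ (f.1 + g.1)) p v = _
        rw [fderiv_extZ hU (g := extZ f.1 + extZ g.1) (fun q => by simp [extZ_apply]),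
          fderiv_add (Hol.differentiableAt hU f p) (Hol.differentiableAt hU g p)]
        rfl
      map_smul' := fun c f => by
        refine Subtype.ext (funext fun p => ?_)
        change fderiv ℂ (extZ (c • f.1)) p v = _
        rw [fderiv_extZ hU (g := c • extZ f.1) (fun q => by simp [extZ_apply]),
          fderiv_const_smul (Hol.differentiableAt hU f p)]
        rfl }
    fun f g => by
      refine Subtype.ext (funext fun p => ?_)
      change fderiv ℂ (extZ (f.1 * g.1)) p v =
        f.1 p * fderiv ℂ (extZ g.1) p v + g.1 p * fderiv ℂ (extZ f.1) p v
      rw [fderiv_extZ hU (g := extZ f.1 * extZ g.1) (fun q => by simp [extZ_apply]),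
        fderiv_mul (Hol.differentiableAt hU f p) (Hol.differentiableAt hU g p)]
      simp [extZ_apply]

lemma pd_apply (hU : IsOpen U) (v : ℂ × ℂ) (hv : ‖v‖ ≤ 1) (f : Hol U) (p : U) {g : ℂ × ℂ → ℂ}
    (h : ∀ p : U, f.1 p = g p) : (pd hU v hv f).1 p = fderiv ℂ g p v := by
  rw [← fderiv_extZ hU h]; rfl

/-- `∂/∂x` on `Hol U`. -/
noncomputable abbrev ddx (hU : IsOpen U) : Derivation ℂ (Hol U) (Hol U) := pd hU (1, 0) (by simp)

/-- `∂/∂y` on `Hol U`. -/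
noncomputable abbrev ddy (hU : IsOpen U) : Derivation ℂ (Hol U) (Hol U) := pd hU (0, 1) (by simp)

lemma ddx_ddy (hU : IsOpen U) (f : Hol U) : ddx hU (ddy hU f) = ddy hU (ddx hU f) := by
  refine Subtype.ext (funext fun p => ?_)
  rw [pd_apply hU _ _ _ p (g := fun q => fderiv ℂ (extZ f.1) q (0, 1)) fun q => rfl,
    pd_apply hU _ _ _ p (g := fun q => fderiv ℂ (extZ f.1) q (1, 0)) fun q => rfl]
  exact fderiv_comm hU f.2 p.2

/-- If `u`, `w` have no common zero and `(a, b)` is pointwise proportional to `(u, w)`, the factor of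
proportionality is holomorphic. -/
lemma Hol.exists_div (hU : IsOpen U) (u w : Hol U) (huw : ∀ p : U, u.1 p ≠ 0 ∨ w.1 p ≠ 0)
    (a b : Hol U) (hab : u * b = w * a) : ∃ h, a = h * u ∧ b = h * w := by
  classical
  have hab' (p : U) : u.1 p * b.1 p = w.1 p * a.1 p := congrFun (congrArg Subtype.val hab) p
  let h : U → ℂ := fun p => if u.1 p ≠ 0 then a.1 p / u.1 p else b.1 p / w.1 p
  have h1 (p : U) (hp : u.1 p ≠ 0) : h p = a.1 p / u.1 p := if_pos hp
  have h2 (p : U) (hp : w.1 p ≠ 0) : h p = b.1 p / w.1 p := by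
    by_cases hu : u.1 p = 0
    · exact if_neg (by simpa using hu)
    · rw [h1 p hu, div_eq_div_iff hu hp]; linear_combination -hab' p
  -- near each point `h` agrees with a quotient whose denominator does not vanish there
  have key (c u : Hol U) (hc : ∀ p : U, u.1 p ≠ 0 → h p = c.1 p / u.1 p) (p : U)
      (hp : u.1 p ≠ 0) : DifferentiableAt ℂ (extZ h) p := by
    have hp' : extZ u.1 p ≠ 0 := by rwa [extZ_apply]
    refine ((Hol.differentiableAt hU c p).mul
      ((Hol.differentiableAt hU u p).inv hp')).congr_of_eventuallyEq ?_
    filter_upwards [hU.mem_nhds p.2, (Hol.differentiableAt hU u p).continuousAt.eventually_ne hp']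
      with q hq hq0
    have e (f : U → ℂ) : extZ f q = f ⟨q, hq⟩ := extZ_apply f ⟨q, hq⟩
    rw [e] at hq0
    simp only [Pi.mul_apply, Pi.inv_apply, e, hc ⟨q, hq⟩ hq0, div_eq_mul_inv]
  refine ⟨⟨h, fun p hp => ?_⟩, Subtype.ext (funext fun p => ?_), Subtype.ext (funext fun p => ?_)⟩
  · refine DifferentiableAt.differentiableWithinAt ?_
    rcases huw ⟨p, hp⟩ with h0 | h0
    · exact key a u h1 ⟨p, hp⟩ h0
    · exact key b w h2 ⟨p, hp⟩ h0
  · change a.1 p = h p * u.1 p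
    by_cases hu : u.1 p = 0
    · have hw := (huw p).resolve_left (not_not.2 hu)
      have := hab' p
      rw [hu, zero_mul] at this
      rw [hu, mul_zero]
      exact (mul_eq_zero.1 this.symm).resolve_left hw
    · rw [h1 p hu, div_mul_cancel₀ _ hu]
  · change b.1 p = h p * w.1 p
    by_cases hw : w.1 p = 0
    · have hu := (huw p).resolve_right (not_not.2 hw)
      have := hab' p
      rw [hw, zero_mul] at this
      rw [hw, mul_zero]
      exact (mul_eq_zero.1 this).resolve_left hu
    · rw [h2 p hw, div_mul_cancel₀ _ hw]

/-- Evaluation at a point of `U`. -/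
def ev (p : U) : Hol U →+* ℂ := (Pi.evalRingHom (fun _ : U => ℂ) p).comp (Hol U).val.toRingHom

lemma ev_apply (p : U) (f : Hol U) : ev p f = f.1 p := rfl

lemma eval_map_ev (A : (Hol U)[X]) (p : U) (c : ℂ) :
    (A.map (ev p)).eval c = (A.eval (algebraMap ℂ (Hol U) c)).1 p := by
  have h := eval₂_at_apply (p := A) (ev p) (algebraMap ℂ (Hol U) c)
  rw [eval_map, ← ev_apply, ← h]; rfl

lemma fderiv_eval (hU : IsOpen U) (v : ℂ × ℂ) (hv : ‖v‖ ≤ 1) (A : (Hol U)[X])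
    (a : ℂ × ℂ → ℂ → ℂ) (ha : ∀ (q : U) c, a q c = (A.map (ev q)).eval c) (p : U) (c : ℂ) :
    fderiv ℂ (fun q => a q c) p v = ((cd (pd hU v hv) A).map (ev p)).eval c := by
  rw [eval_map_ev, ← eval_cd]
  exact (pd_apply hU v hv _ p fun q => by rw [ha, eval_map_ev]).symm

/-- For forms polynomial in `ε`, `intCoeff` is the evaluation of the formal `wedge`. -/
lemma intCoeff_eq (hU : IsOpen U) (A B C : (Hol U)[X]) (a b c : ℂ × ℂ → ℂ → ℂ)
    (ha : ∀ (q : U) ε, a q ε = (A.map (ev q)).eval ε)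
    (hb : ∀ (q : U) ε, b q ε = (B.map (ev q)).eval ε)
    (hc : ∀ (q : U) ε, c q ε = (C.map (ev q)).eval ε) (p : U) (ε : ℂ) :
    intCoeff a b c p ε = ((wedge (ddx hU) (ddy hU) A B C).map (ev p)).eval ε := by
  have hda : deriv (fun e => a p e) ε = ((derivative A).map (ev p)).eval ε := by
    simp only [ha, Polynomial.deriv, derivative_map]
  have hdb : deriv (fun e => b p e) ε = ((derivative B).map (ev p)).eval ε := by
    simp only [hb, Polynomial.deriv, derivative_map]
  simp only [intCoeff, pdx, pdy, hda, hdb, wedge]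
  rw [fderiv_eval hU _ (by simp) C c hc, fderiv_eval hU _ (by simp) C c hc,
    fderiv_eval hU _ (by simp) B b hb, fderiv_eval hU _ (by simp) A a ha, ha, hb, hc]
  simp only [Polynomial.map_add, Polynomial.map_sub, Polynomial.map_mul, eval_add, eval_sub,
    eval_mul]

lemma iteratedDeriv_eval_zero (q : ℂ[X]) (n : ℕ) :
    iteratedDeriv n (fun ε => q.eval ε) 0 = n.factorial * q.coeff n := by
  have h : ∀ n : ℕ, deriv^[n] (fun ε => q.eval ε) = fun ε => (derivative^[n] q).eval ε := by
    intro n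
    induction n with
    | zero => rfl
    | succ n ih =>
      rw [Function.iterate_succ_apply', ih, Function.iterate_succ_apply']
      funext ε
      rw [Polynomial.deriv]
  rw [iteratedDeriv_eq_iterate, h]
  simp only
  rw [← coeff_zero_eq_eval_zero, coeff_iterate_derivative, zero_add, Nat.descFactorial_self,
    nsmul_eq_mul]

/-- Vanishing of the `n`-th `ε`-derivative of `intCoeff` at `0` on `U` means vanishing of the `n`-th
coefficient of the formal `wedge`. -/
lemma iteratedDeriv_intCoeff (hU : IsOpen U) (A B C : (Hol U)[X]) (a b c : ℂ × ℂ → ℂ → ℂ)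
    (ha : ∀ (q : U) ε, a q ε = (A.map (ev q)).eval ε)
    (hb : ∀ (q : U) ε, b q ε = (B.map (ev q)).eval ε)
    (hc : ∀ (q : U) ε, c q ε = (C.map (ev q)).eval ε) (n : ℕ) :
    (∀ p ∈ U, iteratedDeriv n (fun ε => intCoeff a b c p ε) 0 = 0) ↔
      (wedge (ddx hU) (ddy hU) A B C).coeff n = 0 := by
  have h (p : U) : iteratedDeriv n (fun ε => intCoeff a b c p ε) 0 =
      n.factorial * ((wedge (ddx hU) (ddy hU) A B C).coeff n).1 p := by
    rw [funext (intCoeff_eq hU A B C a b c ha hb hc p), iteratedDeriv_eval_zero, coeff_map,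
      ev_apply]
  have hn : (n.factorial : ℂ) ≠ 0 := Nat.cast_ne_zero.2 n.factorial_ne_zero
  constructor
  · intro h0
    refine Subtype.ext (funext fun p => ?_)
    have := h0 p p.2
    rw [h p] at this
    exact (mul_eq_zero.1 this).resolve_left hn
  · intro h0 p hp
    rw [h ⟨p, hp⟩, h0]
    simp

open Classical in
/-- The restriction to `U` of a function holomorphic on `U`; junk value `0` for other functions. -/
noncomputable def toHol (U : Set (ℂ × ℂ)) (f : ℂ × ℂ → ℂ) : Hol U :=
  if hf : DifferentiableOn ℂ f U then
    ⟨fun p => f p, hf.congr (extZ_eqOn fun _ => rfl)⟩ else 0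

lemma toHol_apply {f : ℂ × ℂ → ℂ} (hf : DifferentiableOn ℂ f U) (p : U) :
    (toHol U f).1 p = f p := by
  rw [toHol, dif_pos hf]

lemma sum_Icc_one {M : Type*} [AddCommMonoid M] (k : ℕ) (f : ℕ → M) :
    ∑ i ∈ Finset.Icc 1 k, f i = ∑ i ∈ Finset.range k, f (i + 1) := by
  induction k with
  | zero => simp
  | succ k ih => rw [Finset.sum_Icc_succ_top (by omega), ih, Finset.sum_range_succ]

end Holomorphic

end FGV

/-- Theorem 7 of the paper, both directions combined: for dF + εω with dF nonvanishing,
there exists a Françoise sequence of order k iff there exists a Godbillon-Vey type form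
Ω = (G·(∂F/∂x + εP), G·(∂F/∂y + εQ), Σ_{i=1}^k ε^{i−1}R_i), G = 1 + Σ_{i=1}^k ε^i G_i,
solving the integrability equation Ω ∧ dΩ = 0 up to order k (coefficients of ε^n of
⟨Ω ∧ dΩ⟩ vanish identically for n ≤ k−1). -/
theorem francoise_iff_godbillon_vey
    (U : Set (ℂ × ℂ)) (hU : IsOpen U) (k : ℕ) (hk : 1 ≤ k)
    (F P Q : ℂ × ℂ → ℂ)
    (hF : DifferentiableOn ℂ F U)
    (hdF : ∀ p ∈ U, (pdx F p, pdy F p) ≠ (0, 0))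
    (hP : DifferentiableOn ℂ P U) (hQ : DifferentiableOn ℂ Q U) :
    (∃ g r : ℕ → ℂ × ℂ → ℂ,
      (∀ p, g 0 p = 1) ∧
      (∀ i, 1 ≤ i → i ≤ k → DifferentiableOn ℂ (g i) U ∧ DifferentiableOn ℂ (r i) U) ∧
      (∀ i, 1 ≤ i → i ≤ k → ∀ p ∈ U,
        g (i - 1) p * P p = g i p * pdx F p + pdx (r i) p ∧
        g (i - 1) p * Q p = g i p * pdy F p + pdy (r i) p)) ↔
    (∃ G R : ℕ → ℂ × ℂ → ℂ,
      (∀ i, 1 ≤ i → i ≤ k → DifferentiableOn ℂ (G i) U ∧ DifferentiableOn ℂ (R i) U) ∧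
      (∀ p ∈ U, ∀ n < k,
        iteratedDeriv n
          (fun ε : ℂ => intCoeff
            (fun q e => (1 + ∑ i ∈ Finset.Icc 1 k, e ^ i * G i q) * (pdx F q + e * P q))
            (fun q e => (1 + ∑ i ∈ Finset.Icc 1 k, e ^ i * G i q) * (pdy F q + e * Q q))
            (fun q e => ∑ i ∈ Finset.Icc 1 k, e ^ (i - 1) * R i q) p ε) 0 = 0)) := by
  have hFx (p : U) : (FGV.ddx hU (FGV.toHol U F)).1 p = pdx F p :=
    FGV.pd_apply hU _ _ _ p (FGV.toHol_apply hF)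
  have hFy (p : U) : (FGV.ddy hU (FGV.toHol U F)).1 p = pdy F p :=
    FGV.pd_apply hU _ _ _ p (FGV.toHol_apply hF)
  have hPp := FGV.toHol_apply hP
  have hQp := FGV.toHol_apply hQ
  have hcomm := FGV.ddx_ddy hU
  constructor
  · rintro ⟨g, r, hg0, hdiff, heq⟩
    have hg (i) (hi : i ≤ k) (p : U) : (FGV.toHol U (g i)).1 p = g i p := by
      refine FGV.toHol_apply ?_ p
      rcases Nat.eq_zero_or_pos i with rfl | h
      · rw [show g 0 = fun _ => 1 from funext hg0]; exact differentiableOn_const _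
      · exact (hdiff i h hi).1
    have hr (i) (hi : i < k) (p : U) : (FGV.toHol U (r (i + 1))).1 p = r (i + 1) p :=
      FGV.toHol_apply (hdiff _ (by omega) hi).2 p
    refine ⟨fun i p => (-1) ^ i * g i p, fun i p => (-1) ^ (i + 1) * (i * r i p), ?_, ?_⟩
    · exact fun i h1 h2 => ⟨(hdiff i h1 h2).1.const_mul _,
        ((hdiff i h1 h2).2.const_mul _).const_mul _⟩
    · have key := FGV.forward (FGV.ddx hU) (FGV.ddy hU) hcomm (FGV.toHol U F) (FGV.toHol U P)
        (FGV.toHol U Q) k (fun i => FGV.toHol U (g i)) (fun i => FGV.toHol U (r i))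
        (Subtype.ext (funext fun p => by rw [hg 0 (by omega), hg0]; rfl))
        (fun i hi => Subtype.ext (funext fun p => by
          have h1 := (heq (i + 1) (by omega) hi p p.2).1
          have h2 : (FGV.ddx hU (FGV.toHol U (r (i + 1)))).1 p = pdx (r (i + 1)) p :=
            FGV.pd_apply hU _ _ _ p (hr i hi)
          simp only [Nat.add_sub_cancel] at h1
          simpa [hg i hi.le, hg (i + 1) hi, hFx, hPp, h2] using h1))
        (fun i hi => Subtype.ext (funext fun p => by
          have h1 := (heq (i + 1) (by omega) hi p p.2).2
          have h2 : (FGV.ddy hU (FGV.toHol U (r (i + 1)))).1 p = pdy (r (i + 1)) p :=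
            FGV.pd_apply hU _ _ _ p (hr i hi)
          simp only [Nat.add_sub_cancel] at h1
          simpa [hg i hi.le, hg (i + 1) hi, hFy, hQp, h2] using h1))
      have hM (q : U) (ε : ℂ) : 1 + ∑ i ∈ Finset.Icc 1 k, ε ^ i * ((-1) ^ i * g i q) =
          ((FGV.serM (fun i => FGV.toHol U (g i)) k).map (FGV.ev q)).eval ε := by
        rw [FGV.sum_Icc_one, FGV.serM, Finset.sum_range_succ', Polynomial.map_add,
          Polynomial.map_sum, Polynomial.eval_add, Polynomial.eval_finsetSum, add_comm]
        congr 1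
        · refine Finset.sum_congr rfl fun i hi => ?_
          simp [FGV.ev_apply, hg (i + 1) (Finset.mem_range.1 hi)]
        · simp [FGV.ev_apply, hg 0, hg0]
      have hN (q : U) (ε : ℂ) :
          ∑ i ∈ Finset.Icc 1 k, ε ^ (i - 1) * ((-1) ^ (i + 1) * (i * r i q)) =
          ((FGV.serN (FGV.toHol U F) (fun i => FGV.toHol U (r i)) k).derivative.map
            (FGV.ev q)).eval ε := by
        rw [FGV.sum_Icc_one, FGV.serN, Polynomial.derivative_sub, Polynomial.derivative_C,
          zero_sub, Polynomial.map_neg, Polynomial.eval_neg, Polynomial.derivative_sum,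
          Polynomial.map_sum, Polynomial.eval_finsetSum, ← Finset.sum_neg_distrib]
        refine Finset.sum_congr rfl fun i hi => ?_
        simp only [Polynomial.derivative_mul, Polynomial.derivative_X_pow,
          Polynomial.derivative_C, mul_zero, add_zero]
        simp [FGV.ev_apply, hr i (Finset.mem_range.1 hi)]
        ring
      intro p hp n hn
      refine (FGV.iteratedDeriv_intCoeff hU _ _ _ _ _ _ ?_ ?_ ?_ n).2 (key n hn) p hp
      · intro q ε
        simp only [hM]
        simp only [Polynomial.map_mul, Polynomial.map_add, Polynomial.map_C, Polynomial.map_X,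
          Polynomial.eval_mul, Polynomial.eval_add, Polynomial.eval_C, Polynomial.eval_X,
          FGV.ev_apply, hFx, hPp]
      · intro q ε
        simp only [hM]
        simp only [Polynomial.map_mul, Polynomial.map_add, Polynomial.map_C, Polynomial.map_X,
          Polynomial.eval_mul, Polynomial.eval_add, Polynomial.eval_C, Polynomial.eval_X,
          FGV.ev_apply, hFy, hQp]
      · exact hN
  · rintro ⟨G, R, hdiff, heq⟩
    have hG (i) (hi : i ∈ Finset.Icc 1 k) (p : U) : (FGV.toHol U (G i)).1 p = G i p :=
      FGV.toHol_apply (hdiff i (Finset.mem_Icc.1 hi).1 (Finset.mem_Icc.1 hi).2).1 p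
    have hR (i) (hi : i ∈ Finset.Icc 1 k) (p : U) : (FGV.toHol U (R i)).1 p = R i p :=
      FGV.toHol_apply (hdiff i (Finset.mem_Icc.1 hi).1 (Finset.mem_Icc.1 hi).2).2 p
    let Gp : Polynomial (FGV.Hol U) :=
      1 + ∑ i ∈ Finset.Icc 1 k, Polynomial.X ^ i * Polynomial.C (FGV.toHol U (G i))
    let Rp : Polynomial (FGV.Hol U) :=
      ∑ i ∈ Finset.Icc 1 k, Polynomial.X ^ (i - 1) * Polynomial.C (FGV.toHol U (R i))
    have hGp (q : U) (ε : ℂ) : 1 + ∑ i ∈ Finset.Icc 1 k, ε ^ i * G i q =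
        (Gp.map (FGV.ev q)).eval ε := by
      simp only [Gp, Polynomial.map_add, Polynomial.map_sum, Polynomial.eval_add,
        Polynomial.eval_finsetSum, Polynomial.map_one, Polynomial.eval_one]
      congr 1
      refine Finset.sum_congr rfl fun i hi => ?_
      simp only [Polynomial.map_mul, Polynomial.map_pow, Polynomial.map_C, Polynomial.map_X,
        Polynomial.eval_mul, Polynomial.eval_pow, Polynomial.eval_C, Polynomial.eval_X,
        FGV.ev_apply, hG i hi]
    have hRp (q : U) (ε : ℂ) : ∑ i ∈ Finset.Icc 1 k, ε ^ (i - 1) * R i q =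
        (Rp.map (FGV.ev q)).eval ε := by
      simp only [Rp, Polynomial.map_sum, Polynomial.eval_finsetSum]
      refine Finset.sum_congr rfl fun i hi => ?_
      simp only [Polynomial.map_mul, Polynomial.map_pow, Polynomial.map_C, Polynomial.map_X,
        Polynomial.eval_mul, Polynomial.eval_pow, Polynomial.eval_C, Polynomial.eval_X,
        FGV.ev_apply, hR i hi]
    have hG0 : Gp.coeff 0 = 1 := by
      simp only [Gp, FGV.sum_Icc_one, Polynomial.coeff_add, Polynomial.finsetSum_coeff,
        Polynomial.mul_coeff_zero]
      simp
    have hdiv := FGV.Hol.exists_div hU (FGV.ddx hU (FGV.toHol U F)) (FGV.ddy hU (FGV.toHol U F))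
      (fun p => by
        rw [hFx, hFy]
        have := hdF p p.2
        rw [Ne, Prod.mk.injEq] at this
        tauto)
    obtain ⟨g, r, hg0, hgP, hgQ⟩ := FGV.backward (FGV.ddx hU) (FGV.ddy hU) hcomm (FGV.toHol U F)
      (FGV.toHol U P) (FGV.toHol U Q) hdiv k Gp Rp hG0 (fun n hn => by
        refine (FGV.iteratedDeriv_intCoeff hU _ _ _ _ _ _ ?_ ?_ ?_ n).1
          fun p hp => heq p hp n hn
        · intro q ε
          simp only [hGp]
          simp only [Polynomial.map_mul, Polynomial.map_add, Polynomial.map_C, Polynomial.map_X,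
            Polynomial.eval_mul, Polynomial.eval_add, Polynomial.eval_C, Polynomial.eval_X,
            FGV.ev_apply, hFx, hPp]
        · intro q ε
          simp only [hGp]
          simp only [Polynomial.map_mul, Polynomial.map_add, Polynomial.map_C, Polynomial.map_X,
            Polynomial.eval_mul, Polynomial.eval_add, Polynomial.eval_C, Polynomial.eval_X,
            FGV.ev_apply, hFy, hQp]
        · exact hRp) k le_rfl
    -- the extension by zero of the constant `1` is not `1` off `U`, hence the case split
    refine ⟨fun i => if i = 0 then fun _ => 1 else FGV.extZ (g i).1, fun i => FGV.extZ (r i).1,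
      fun p => by simp, ?_, ?_⟩
    · intro i h1 _
      simp only [if_neg (show ¬ i = 0 by omega)]
      exact ⟨(g i).2, (r i).2⟩
    · intro i h1 h2 p hp
      obtain ⟨j, rfl⟩ : ∃ j, i = j + 1 := ⟨i - 1, by omega⟩
      have hgj : (if j = 0 then fun _ => 1 else FGV.extZ (g j).1) p = (g j).1 ⟨p, hp⟩ := by
        split_ifs with h
        · rw [h, hg0]; rfl
        · exact FGV.extZ_apply _ ⟨p, hp⟩
      have e (f : U → ℂ) : FGV.extZ f p = f ⟨p, hp⟩ := FGV.extZ_apply f ⟨p, hp⟩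
      have hx := congrFun (congrArg Subtype.val (hgP j (by omega))) ⟨p, hp⟩
      have hy := congrFun (congrArg Subtype.val (hgQ j (by omega))) ⟨p, hp⟩
      have hrx : (FGV.ddx hU (r (j + 1))).1 ⟨p, hp⟩ = pdx (FGV.extZ (r (j + 1)).1) p := rfl
      have hry : (FGV.ddy hU (r (j + 1))).1 ⟨p, hp⟩ = pdy (FGV.extZ (r (j + 1)).1) p := rfl
      simp only [Nat.add_sub_cancel, hgj, if_neg (Nat.succ_ne_zero j), e, ← hrx, ← hry]
      constructor
      · simpa [hFx, hPp] using hx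
      · simpa [hFy, hQp] using hy
end

section
/- Let U ⊆ ℂ² be open, let F : U → ℂ and L : U → ℂ be holomorphic, and let r : U → ℂ be holomorphic and nonvanishing with ∂L/∂x = (∂r/∂x)/r and ∂L/∂y = (∂r/∂y)/r on U (L is a branch of log r). Let ω = (F·(∂r/∂x)/r, F·(∂r/∂y)/r) (i.e. ω = F·dr/r). Define, for i ≥ 0, g_i = (−1)^i L^i / i!, and for i ≥ 1, r_i = −F·g_i = (−1)^{i+1} F·L^i / i!. Then for every i ≥ 1 the relation g_{i−1}·ω = g_i·dF + dr_i holds on U, i.e. g_{i−1}·F·(∂r/∂x)/r = g_i·∂F/∂x + ∂r_i/∂x and g_{i−1}·F·(∂r/∂y)/r = g_i·∂F/∂y + ∂r_i/∂y; so (g_i, r_i) is a Françoise sequence for dF + εω of every order. -/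
/-- g_i = (−1)^i L^i / i!. -/
noncomputable def gdar (L : ℂ × ℂ → ℂ) (i : ℕ) (q : ℂ × ℂ) : ℂ :=
  (-1 : ℂ) ^ i * L q ^ i / (Nat.factorial i : ℂ)

/-- r_i = −F·g_i = (−1)^{i+1} F·L^i / i!. -/
noncomputable def rdar (F L : ℂ × ℂ → ℂ) (i : ℕ) (q : ℂ × ℂ) : ℂ :=
  -(F q) * gdar L i q

/-- The relation `g_n · F dL = g_{n+1} dF + dr_{n+1}` at a point, evaluated on a tangent vector `v`.
It is the Leibniz rule for `r_{n+1} = -F g_{n+1}` together with `dg_{n+1} = -g_n dL`. -/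
theorem gdar_mul_fderiv {F L : ℂ × ℂ → ℂ} {p : ℂ × ℂ}
    (hF : DifferentiableAt ℂ F p) (hL : DifferentiableAt ℂ L p) (n : ℕ) (v : ℂ × ℂ) :
    gdar L n p * (F p * fderiv ℂ L p v)
      = gdar L (n + 1) p * fderiv ℂ F p v + fderiv ℂ (rdar F L (n + 1)) p v := by
  have hg : HasFDerivAt (gdar L (n + 1)) (-(gdar L n p) • fderiv ℂ L p) p := by
    have h := (hL.hasFDerivAt.pow (n + 1)).const_mul ((-1 : ℂ) ^ (n + 1) / ((n + 1).factorial : ℂ))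
    refine (h.congr_fderiv ?_).congr_of_eventuallyEq (.of_forall fun q => ?_)
    · have h1 : (n.factorial : ℂ) ≠ 0 := by exact_mod_cast n.factorial_ne_zero
      have h2 : (n : ℂ) + 1 ≠ 0 := by exact_mod_cast n.succ_ne_zero
      ext <;>
      · simp [gdar, Nat.factorial_succ]
        field_simp
        ring
    · simp only [gdar]
      ring
  have hr : HasFDerivAt (rdar F L (n + 1)) _ p := hF.hasFDerivAt.neg.mul hg
  rw [hr.fderiv]
  simp
  ring

/-- Example 3 of the paper: for the Darboux-integrable perturbation ω = F·dr/r (with L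
a holomorphic branch of log r, i.e. dL = dr/r), the pairs g_i = (−1)^i L^i/i!,
r_i = −F·g_i form a Françoise sequence of every order: g_{i−1}·ω = g_i·dF + dr_i
for all i ≥ 1 on U. -/
theorem example_three_francoise_sequence
    (U : Set (ℂ × ℂ)) (hU : IsOpen U)
    (F L r : ℂ × ℂ → ℂ)
    (hF : DifferentiableOn ℂ F U) (hL : DifferentiableOn ℂ L U)
    (hr : DifferentiableOn ℂ r U)
    (hr0 : ∀ p ∈ U, r p ≠ 0)
    (hLx : ∀ p ∈ U, pdx L p = pdx r p / r p)
    (hLy : ∀ p ∈ U, pdy L p = pdy r p / r p) :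
    ∀ i : ℕ, 1 ≤ i → ∀ p ∈ U,
      gdar L (i - 1) p * (F p * (pdx r p / r p))
        = gdar L i p * pdx F p + pdx (rdar F L i) p ∧
      gdar L (i - 1) p * (F p * (pdy r p / r p))
        = gdar L i p * pdy F p + pdy (rdar F L i) p := by
  intro i hi p hp
  obtain ⟨n, rfl⟩ := Nat.exists_eq_add_of_le' hi
  have hFp := hF.differentiableAt (hU.mem_nhds hp)
  have hLp := hL.differentiableAt (hU.mem_nhds hp)
  rw [← hLx p hp, ← hLy p hp, Nat.add_sub_cancel]
  exact ⟨gdar_mul_fderiv hFp hLp n (1, 0), gdar_mul_fderiv hFp hLp n (0, 1)⟩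
end
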